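/- arXiv:1701.05726 — 2 statements merged into one kernel-verified Lean document; each statement's English description precedes it below -/
import Mathlib

section
/- Let Ω be a domain (open connected set) in ℂ and let f : Ω → ℂ be a continuous, light, and open mapping. Then f is a discrete map, i.e. for every y ∈ ℂ the fiber f⁻¹({y}) is a discrete subset of Ω. -/
/-!
Write `Z` for the zero set of `f` (after a translation, the fibre under study is the one over `0`).

*Normal neighbourhoods.* Since `Z` is totally disconnected and locally compact, a given zero `x` has
arbitrarily small open neighbourhoods `U` with `r ≤ ‖f‖` on the boundary of `U`. Over the disc of
radius `r` the map `f` restricted to `U` is open and proper, so for a connected open subset `S` of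
that disc each component of `U ∩ f ⁻¹' S` is mapped onto `S`, and by compactness of one fibre there
are only finitely many components. This is applied to the upper and to the lower half disc. If
`U ∩ Z` were infinite, the pigeonhole principle would give two zeros `p ≠ q` lying in the closure of
the same component over the upper half disc and in the closure of the same component over the lower
half disc.

*Accessibility.* Components over shrinking half discs, nested and with `p` in their closures, have
closures that intersect in a connected subset of `Z`, hence in `{p}`; so `p` is the end of a
continuum otherwise contained in the component. Therefore `p` and `q` are joined by a continuum `A`
with `0 < im f` on `A \ {p, q}`, and by a continuum `B` with `im f < 0` on `B \ {p, q}`.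

*Planar topology.* Some bounded face `R` of `A ∪ B` has points of both `A \ {p, q}` and
`B \ {p, q}` in its closure (`Stoilow.exists_bounded_face`). Otherwise a small circle around `p`
is the union of closed sets `SA`, disjoint from `B`, and `SB`, disjoint from `A`, such that
`SA ∩ SB` lies in the unbounded face and hence in a continuum `N` of that face. As `A` and `B` join
`p` to `q`, the function `(z - p) / (z - q)` has continuous logarithms on `SA ∪ N` and on `SB ∪ N`;
these differ by a constant on `N`, so they glue to a logarithm on the circle, which does not exist.

*Contradiction.* The set `f '' R` is open, bounded and connected, and its boundary lies in
`f '' (A ∪ B)`, which meets the real axis only at `0`. A half axis meeting `f '' R` would be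
contained in it, against boundedness, so `f '' R` misses the real axis (`Stoilow.no_face`); but it
meets both open half planes.
-/

namespace Stoilow

open Set Metric Filter Topology

/-! ### Continuous logarithms -/

/-- A continuous function with constant exponential is constant on connected sets. -/
theorem eq_of_exp_eq {X : Type*} [TopologicalSpace X] {s : Set X} (hs : IsPreconnected s)
    {d : X → ℂ} (hd : ContinuousOn d s) {c : ℂ} (hc : ∀ x ∈ s, Complex.exp (d x) = c)
    {x y : X} (hx : x ∈ s) (hy : y ∈ s) : d x = d y := by
  refine hs.induction₂' (fun x y => d x = d y) (fun x hx => ?_)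
    (fun x y z _ _ _ h h' => h.trans h') hx hy
  have h1 : ∀ᶠ z in 𝓝[s] x, dist (d z) (d x) < 2 * Real.pi :=
    (hd x hx).eventually (ball_mem_nhds _ Real.two_pi_pos)
  filter_upwards [h1, self_mem_nhdsWithin] with z hz hzs
  have h2 : d z = d x := by
    obtain ⟨n, hn⟩ := Complex.exp_eq_exp_iff_exists_int.1 ((hc z hzs).trans (hc x hx).symm)
    rw [hn, dist_eq_norm, add_sub_cancel_left] at hz
    have h3 : ‖(n : ℂ) * (2 * Real.pi * Complex.I)‖ = |(n : ℝ)| * (2 * Real.pi) := by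
      simp [abs_of_pos Real.pi_pos]
    rw [h3] at hz
    have h4 : |(n : ℝ)| < 1 := by
      by_contra hcon
      push Not at hcon
      nlinarith [Real.two_pi_pos]
    have h5 : n = 0 := by
      rw [← Int.abs_lt_one_iff]
      exact_mod_cast h4
    simp [hn, h5]
  exact ⟨h2.symm, h2⟩

/-- If a connected set `L` disjoint from the compact set `Y` contains `p` and `q`, then
`(z - p) / (z - q)` has a continuous logarithm on `Y`. The relation between `p` and `q` is an
equivalence relation, and nearby points of `L` are related through the principal branch. -/
theorem exists_log_of_connected {Y L : Set ℂ} (hY : IsCompact Y) (hL : IsPreconnected L)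
    (hdisj : Disjoint Y L) {p q : ℂ} (hp : p ∈ L) (hq : q ∈ L) :
    ∃ g : ℂ → ℂ, ContinuousOn g Y ∧ ∀ z ∈ Y, z - p = (z - q) * Complex.exp (g z) := by
  have hsymm : ∀ a b : ℂ, (∃ g : ℂ → ℂ, ContinuousOn g Y ∧
      ∀ z ∈ Y, z - a = (z - b) * Complex.exp (g z)) → ∃ g : ℂ → ℂ, ContinuousOn g Y ∧
      ∀ z ∈ Y, z - b = (z - a) * Complex.exp (g z) := by
    rintro a b ⟨g, hg, h⟩
    refine ⟨fun z => -g z, hg.neg, fun z hz => ?_⟩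
    rw [h z hz, mul_assoc, ← Complex.exp_add]
    simp
  refine hL.induction₂' (fun a b => ∃ g : ℂ → ℂ, ContinuousOn g Y ∧
    ∀ z ∈ Y, z - a = (z - b) * Complex.exp (g z)) (fun b hb => ?_) ?_ hp hq
  · have hbY : b ∈ Yᶜ := fun h => hdisj.le_bot ⟨h, hb⟩
    obtain ⟨δ, hδ, hball⟩ := Metric.isOpen_iff.1 hY.isClosed.isOpen_compl b hbY
    have h1 : ∀ᶠ a in 𝓝[L] b, a ∈ ball b δ := mem_nhdsWithin_of_mem_nhds (ball_mem_nhds _ hδ)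
    filter_upwards [h1] with a ha
    suffices hab : ∃ g : ℂ → ℂ, ContinuousOn g Y ∧
      ∀ z ∈ Y, z - a = (z - b) * Complex.exp (g z) from ⟨hsymm _ _ hab, hab⟩
    have hne : ∀ z ∈ Y, z - b ≠ 0 := fun z hz h0 => hbY (sub_eq_zero.1 h0 ▸ hz)
    have hslit : ∀ z ∈ Y, 1 + (b - a) / (z - b) ∈ Complex.slitPlane := by
      intro z hz
      apply Complex.mem_slitPlane_of_norm_lt_one
      rw [norm_div, div_lt_one (norm_pos_iff.2 (hne z hz))]
      have h2 : δ ≤ ‖z - b‖ := by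
        by_contra hcon
        push Not at hcon
        exact hball (by rwa [mem_ball, dist_eq_norm]) hz
      rw [mem_ball, dist_comm, dist_eq_norm] at ha
      linarith
    refine ⟨fun z => Complex.log (1 + (b - a) / (z - b)), ?_, fun z hz => ?_⟩
    · refine ContinuousOn.clog ?_ hslit
      exact continuousOn_const.add (continuousOn_const.div (by fun_prop) hne)
    · rw [Complex.exp_log (Complex.slitPlane_ne_zero (hslit z hz))]
      field_simp [hne z hz]
      ring
  · rintro a b c - - - ⟨g, hg, h⟩ ⟨g', hg', h'⟩
    refine ⟨fun z => g' z + g z, hg'.add hg, fun z hz => ?_⟩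
    rw [h z hz, h' z hz, Complex.exp_add]
    ring

/-- The function `(z - p) / (z - q)` has no continuous logarithm on a circle around `p` that
leaves `q` outside: `z - q` has one there, and `z - p` has winding number one. -/
theorem no_log_on_sphere {p q : ℂ} {ε : ℝ} (hε : 0 < ε) (hq : ε < dist p q) (g : ℂ → ℂ)
    (hg : ContinuousOn g (sphere p ε))
    (h : ∀ z ∈ sphere p ε, z - p = (z - q) * Complex.exp (g z)) : False := by
  have hpq : p - q ≠ 0 := by
    rw [← norm_pos_iff, ← dist_eq_norm]; linarith
  set c : ℝ → ℂ := fun θ => circleMap p ε θ with hc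
  have hcs : ∀ θ, c θ ∈ sphere p ε := fun θ => circleMap_mem_sphere p hε.le θ
  have hcc : Continuous c := continuous_circleMap p ε
  have hslit : ∀ θ, 1 + (c θ - p) / (p - q) ∈ Complex.slitPlane := by
    intro θ
    apply Complex.mem_slitPlane_of_norm_lt_one
    rw [norm_div, div_lt_one (norm_pos_iff.2 hpq), ← dist_eq_norm, ← dist_eq_norm,
      mem_sphere.1 (hcs θ)]
    exact hq
  set k : ℝ → ℂ := fun θ => g (c θ) + Complex.log (1 + (c θ - p) / (p - q)) with hk
  have hkc : Continuous k := by
    refine (hg.comp_continuous hcc hcs).add (Continuous.clog ?_ hslit)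
    exact continuous_const.add ((hcc.sub continuous_const).div_const _)
  have hexp : ∀ θ : ℝ, Complex.exp (k θ - θ * Complex.I) = ε / (p - q) := by
    intro θ
    have h1 := h _ (hcs θ)
    have h2 : c θ - p = ε * Complex.exp (θ * Complex.I) := by simp [hc, circleMap]
    have h3 : c θ - q = (p - q) * (1 + (c θ - p) / (p - q)) := by field_simp; ring
    rw [h3, h2] at h1
    have h4 := Complex.exp_log (Complex.slitPlane_ne_zero (hslit θ))
    rw [Complex.exp_sub, hk, Complex.exp_add, h4, h2, div_eq_div_iff (Complex.exp_ne_zero _) hpq]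
    linear_combination -h1
  have h5 := eq_of_exp_eq isPreconnected_univ
    (d := fun θ : ℝ => k θ - θ * Complex.I) (by fun_prop) (fun θ _ => hexp θ)
    (mem_univ 0) (mem_univ (2 * Real.pi))
  have h6 : c (2 * Real.pi) = c 0 := by
    simpa using periodic_circleMap p ε 0
  simp only [hk, h6] at h5
  push_cast at h5
  exact Complex.two_pi_I_ne_zero (by linear_combination h5)

/-! ### Continua -/

/-- A compact subset of a plane domain lies in a continuum contained in the domain. -/
theorem exists_compact_connected {E M : Set ℂ} (hE : IsOpen E) (hEc : IsConnected E)
    (hM : IsCompact M) (hME : M ⊆ E) :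
    ∃ N, IsCompact N ∧ IsPreconnected N ∧ M ⊆ N ∧ N ⊆ E := by
  obtain ⟨e, he⟩ := hEc.nonempty
  have hpath := hE.isConnected_iff_isPathConnected.1 hEc
  suffices h : ∃ N, IsCompact N ∧ IsPreconnected N ∧ M ⊆ N ∧ N ⊆ E ∧ e ∈ N by
    obtain ⟨N, h1, h2, h3, h4, -⟩ := h
    exact ⟨N, h1, h2, h3, h4⟩
  refine hM.induction_on (p := fun M => ∃ N, IsCompact N ∧ IsPreconnected N ∧ M ⊆ N ∧ N ⊆ E ∧ e ∈ N)
    ?_ ?_ ?_ ?_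
  · exact ⟨{e}, isCompact_singleton, isPreconnected_singleton, by simp, by simpa using he, by simp⟩
  · rintro s t hst ⟨N, h1, h2, h3, h4⟩
    exact ⟨N, h1, h2, hst.trans h3, h4⟩
  · rintro s t ⟨N, h1, h2, h3, h4, h5⟩ ⟨N', h1', h2', h3', h4', h5'⟩
    exact ⟨N ∪ N', h1.union h1', h2.union e h5 h5' h2', union_subset_union h3 h3',
      union_subset h4 h4', Or.inl h5⟩
  · intro x hx
    obtain ⟨r, hr, hball⟩ := Metric.nhds_basis_closedBall.mem_iff.1 (hE.mem_nhds (hME hx))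
    obtain ⟨γ, hγ⟩ := hpath.joinedIn e he x (hME hx)
    refine ⟨closedBall x r, mem_nhdsWithin_of_mem_nhds (closedBall_mem_nhds x hr),
      range γ ∪ closedBall x r, ?_, ?_, subset_union_right, ?_, Or.inl ⟨0, γ.source⟩⟩
    · exact (isCompact_range γ.continuous).union (isCompact_closedBall x r)
    · exact (isPreconnected_range γ.continuous).union x ⟨1, γ.target⟩ (mem_closedBall_self hr.le)
        isPreconnected_closedBall
    · exact union_subset (by rintro _ ⟨t, rfl⟩; exact hγ t) hball

theorem isPreconnected_iInter_nested {K : ℕ → Set ℂ} (hanti : Antitone K)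
    (hK : ∀ n, IsCompact (K n)) (hc : ∀ n, IsPreconnected (K n)) :
    IsPreconnected (⋂ n, K n) := by
  rw [isPreconnected_closed_iff]
  intro t t' ht ht' hsub hne hne'
  by_contra hcon
  have hcomp : IsCompact (⋂ n, K n) :=
    (hK 0).of_isClosed_subset (isClosed_iInter fun n => (hK n).isClosed) (iInter_subset _ 0)
  have hdisj : Disjoint ((⋂ n, K n) ∩ t) ((⋂ n, K n) ∩ t') := by
    rw [Set.disjoint_left]
    rintro z ⟨hz, hzt⟩ ⟨-, hzt'⟩
    exact hcon ⟨z, hz, hzt, hzt'⟩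
  obtain ⟨u, v, hu, hv, htu, htv, huv⟩ :=
    SeparatedNhds.of_isCompact_isCompact (hcomp.inter_right ht) (hcomp.inter_right ht') hdisj
  obtain ⟨n, hn⟩ := exists_subset_nhds_of_isCompact (U := u ∪ v) hanti.directed_ge hK
    (fun x hx => (hu.union hv).mem_nhds ((hsub hx).imp (fun h => htu ⟨hx, h⟩)
      (fun h => htv ⟨hx, h⟩)))
  obtain ⟨a, ha⟩ := hne
  obtain ⟨b, hb⟩ := hne'
  obtain ⟨z, -, hzu, hzv⟩ := hc n u v hu hv hn ⟨a, mem_iInter.1 ha.1 n, htu ha⟩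
    ⟨b, mem_iInter.1 hb.1 n, htv hb⟩
  exact Set.disjoint_left.1 huv hzu hzv

/-! ### Faces of the union of two continua -/

/-- The distance of an angle to the set of angles whose point on the circle lies in `A` depends
only on the point of the circle. -/
theorem infDist_preimage_circleMap_le {p : ℂ} {ε : ℝ} (hε : 0 < ε) {A : Set ℂ}
    (hA : IsClosed A) (hne : (circleMap p ε ⁻¹' A).Nonempty) {θ θ' : ℝ}
    (h : circleMap p ε θ = circleMap p ε θ') :
    infDist θ (circleMap p ε ⁻¹' A) ≤ infDist θ' (circleMap p ε ⁻¹' A) := by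
  obtain ⟨x, hx, hdist⟩ :=
    (hA.preimage (continuous_circleMap p ε)).exists_infDist_eq_dist hne θ'
  have hε' : (ε : ℂ) ≠ 0 := by exact_mod_cast hε.ne'
  have h1 : Complex.exp (θ * Complex.I) = Complex.exp (θ' * Complex.I) := by
    simpa [circleMap, hε'] using h
  have h2 : circleMap p ε (x + (θ - θ')) = circleMap p ε x := by
    simp only [circleMap]
    congr 2
    push_cast
    rw [show ((x : ℂ) + (θ - θ')) * Complex.I = x * Complex.I + (θ * Complex.I - θ' * Complex.I)
      by ring, Complex.exp_add, Complex.exp_sub, h1, div_self (Complex.exp_ne_zero _), mul_one]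
  have h3 : x + (θ - θ') ∈ circleMap p ε ⁻¹' A := by
    rw [mem_preimage, h2]; exact hx
  calc _ ≤ dist θ (x + (θ - θ')) := infDist_le_dist_of_mem h3
    _ = infDist θ' (circleMap p ε ⁻¹' A) := by
      rw [hdist, Real.dist_eq, Real.dist_eq]; congr 1; ring

theorem frontier_connectedComponentIn_compl_subset {J : Set ℂ} (hJ : IsClosed J) (z : ℂ) :
    frontier (connectedComponentIn Jᶜ z) ⊆ J := by
  intro w hw
  by_contra hwJ
  have hopen : IsOpen (connectedComponentIn Jᶜ w) := hJ.isOpen_compl.connectedComponentIn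
  obtain ⟨v, hv1, hv2⟩ := mem_closure_iff.1 hw.1 _ hopen (mem_connectedComponentIn hwJ)
  have heq := (connectedComponentIn_eq hv1).trans (connectedComponentIn_eq hv2).symm
  have hw2 := hw.2
  rw [← heq, hopen.interior_eq] at hw2
  exact hw2 (mem_connectedComponentIn hwJ)

/-- Two continua that meet only at two common points `p`, `q` bound together: some bounded face `R`
of `A ∪ B` is adjacent to both `A \ {p, q}` and `B \ {p, q}`. -/
theorem exists_bounded_face {A B : Set ℂ} (hA : IsCompact A) (hB : IsCompact B)
    (hAc : IsPreconnected A) (hBc : IsPreconnected B) {p q : ℂ} (hpq : p ≠ q)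
    (hpA : p ∈ A) (hqA : q ∈ A) (hpB : p ∈ B) (hqB : q ∈ B) (hAB : A ∩ B ⊆ {p, q})
    {c : ℂ} {ρ : ℝ} (hsub : A ∪ B ⊆ ball c ρ) :
    ∃ R : Set ℂ, IsOpen R ∧ IsPreconnected R ∧ R ⊆ ball c ρ ∧ frontier R ⊆ A ∪ B ∧
      (∃ a ∈ A, a ≠ p ∧ a ≠ q ∧ a ∈ closure R) ∧ (∃ b ∈ B, b ≠ p ∧ b ≠ q ∧ b ∈ closure R) := by
  by_contra hcon
  have hJ : IsClosed (A ∪ B) := (hA.union hB).isClosed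
  obtain ⟨ε, hε, hεball, hεq⟩ : ∃ ε > 0, closedBall p ε ⊆ ball c ρ ∧ ε < dist p q := by
    have hd : 0 < dist p q := dist_pos.2 hpq
    obtain ⟨ε, hε, h⟩ := Metric.nhds_basis_closedBall.mem_iff.1
      (isOpen_ball.mem_nhds (hsub (Or.inl hpA)))
    refine ⟨min ε (dist p q / 2), lt_min hε (by linarith),
      (closedBall_subset_closedBall (min_le_left _ _)).trans h, ?_⟩
    have := min_le_right ε (dist p q / 2)
    linarith
  set γ : ℝ → ℂ := circleMap p ε with hγ
  have hγc : Continuous γ := continuous_circleMap p ε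
  have hγs : ∀ θ, γ θ ∈ sphere p ε := fun θ => circleMap_mem_sphere p hε.le θ
  have hγp : ∀ θ, γ θ ≠ p := fun θ h => by
    have := mem_sphere.1 (hγs θ); rw [h, dist_self] at this; linarith
  have hγq : ∀ θ, γ θ ≠ q := fun θ h => by
    have := mem_sphere.1 (hγs θ); rw [h, dist_comm] at this; linarith
  have hcross : ∀ L : Set ℂ, IsPreconnected L → p ∈ L → q ∈ L → (γ ⁻¹' L).Nonempty := by
    intro L hL hp hq
    obtain ⟨z, hz, hzε⟩ := hL.intermediate_value hp hq (f := fun z => dist z p)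
      (by fun_prop) (show ε ∈ Icc (dist p p) (dist q p) from
        ⟨by simpa using hε.le, by rw [dist_comm]; exact hεq.le⟩)
    have hz' : z ∈ range γ := by
      rw [hγ, range_circleMap, abs_of_pos hε]; exact hzε
    obtain ⟨θ, rfl⟩ := hz'
    exact ⟨θ, hz⟩
  have hPne := hcross A hAc hpA hqA
  have hQne := hcross B hBc hpB hqB
  have hP : IsClosed (γ ⁻¹' A) := hA.isClosed.preimage hγc
  have hQ : IsClosed (γ ⁻¹' B) := hB.isClosed.preimage hγc
  have hPQ : ∀ θ, γ θ ∈ A → γ θ ∈ B → False := fun θ h1 h2 => by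
    rcases hAB ⟨h1, h2⟩ with h | h
    · exact hγp θ h
    · exact hγq θ h
  set a : ℝ → ℝ := fun θ => infDist θ (γ ⁻¹' A) with ha
  set b : ℝ → ℝ := fun θ => infDist θ (γ ⁻¹' B) with hb
  have hac : Continuous a := continuous_infDist_pt _
  have hbc : Continuous b := continuous_infDist_pt _
  have ha0 : ∀ θ, a θ ≤ 0 → γ θ ∈ A := fun θ h =>
    (hP.mem_iff_infDist_zero hPne).2 (le_antisymm h infDist_nonneg)
  have hb0 : ∀ θ, b θ ≤ 0 → γ θ ∈ B := fun θ h =>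
    (hQ.mem_iff_infDist_zero hQne).2 (le_antisymm h infDist_nonneg)
  have ha0' : ∀ θ, γ θ ∈ A → a θ = 0 := fun θ h => infDist_zero_of_mem h
  have hb0' : ∀ θ, γ θ ∈ B → b θ = 0 := fun θ h => infDist_zero_of_mem h
  -- Points of the circle that are, in angle, at least as close to `A` as to `B`; `SB` is the reverse.
  set SA : Set ℂ := γ '' (Icc 0 (2 * Real.pi) ∩ {θ | a θ ≤ b θ}) with hSA
  set SB : Set ℂ := γ '' (Icc 0 (2 * Real.pi) ∩ {θ | b θ ≤ a θ}) with hSB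
  have hSAc : IsCompact SA := (isCompact_Icc.inter_right (isClosed_le hac hbc)).image hγc
  have hSBc : IsCompact SB := (isCompact_Icc.inter_right (isClosed_le hbc hac)).image hγc
  have hSAB : ∀ z ∈ SA, z ∉ B := by
    rintro _ ⟨θ, ⟨-, hθ⟩, rfl⟩ hzB
    exact hPQ θ (ha0 θ ((hb0' θ hzB) ▸ hθ)) hzB
  have hSBA : ∀ z ∈ SB, z ∉ A := by
    rintro _ ⟨θ, ⟨-, hθ⟩, rfl⟩ hzA
    exact hPQ θ hzA (hb0 θ ((ha0' θ hzA) ▸ hθ))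
  have hcover : sphere p ε ⊆ SA ∪ SB := by
    intro z hz
    rw [← abs_of_pos hε, ← image_circleMap_Ioc] at hz
    obtain ⟨θ, hθ, rfl⟩ := hz
    rcases le_total (a θ) (b θ) with h | h
    · exact Or.inl ⟨θ, ⟨Ioc_subset_Icc_self hθ, h⟩, rfl⟩
    · exact Or.inr ⟨θ, ⟨Ioc_subset_Icc_self hθ, h⟩, rfl⟩
  -- `E` is the unbounded face of `A ∪ B`: it contains the circle surrounding both continua.
  have hsph : sphere c ρ ⊆ (A ∪ B)ᶜ := fun z hz hzJ => by
    have h1 := mem_ball.1 (hsub hzJ)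
    rw [mem_sphere.1 hz] at h1
    exact lt_irrefl _ h1
  have hρ : 0 ≤ ρ := dist_nonneg.trans (mem_ball.1 (hsub (Or.inl hpA))).le
  have hsphc : IsConnected (sphere c ρ) := isConnected_sphere (by simp) c hρ
  obtain ⟨s₀, hs₀⟩ := hsphc.nonempty
  set E : Set ℂ := connectedComponentIn (A ∪ B)ᶜ s₀ with hE
  have hEo : IsOpen E := hJ.isOpen_compl.connectedComponentIn
  have hEc : IsConnected E := isConnected_connectedComponentIn_iff.2 (hsph hs₀)
  have hEJ : E ⊆ (A ∪ B)ᶜ := connectedComponentIn_subset _ _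
  have hsphE : sphere c ρ ⊆ E := hsphc.isPreconnected.subset_connectedComponentIn hs₀ hsph
  have hME : SA ∩ SB ⊆ E := by
    rintro z ⟨⟨θ, ⟨-, hθ⟩, hθz⟩, ⟨θ', ⟨-, hθ'⟩, hθ'z⟩⟩
    have hγγ : γ θ = γ θ' := hθz.trans hθ'z.symm
    have hab : a θ = b θ := by
      refine le_antisymm hθ ?_
      calc b θ ≤ b θ' := infDist_preimage_circleMap_le hε hB.isClosed hQne hγγ
        _ ≤ a θ' := hθ'
        _ ≤ a θ := infDist_preimage_circleMap_le hε hA.isClosed hPne hγγ.symm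
    have hpos : 0 < a θ := by
      by_contra h
      push Not at h
      exact hPQ θ (ha0 θ h) (hb0 θ (hab ▸ h))
    by_contra hzE
    subst hθz
    -- The open arc of half-length `a θ = b θ` around an equidistant point avoids `A ∪ B`, while the
    -- closed arc touches both sets; so its face is adjacent to both and must be the unbounded one.
    have harc : γ '' ball θ (a θ) ⊆ (A ∪ B)ᶜ := by
      rintro _ ⟨t, ht, rfl⟩ (h | h)
      · have h1 : a θ ≤ dist θ t := infDist_le_dist_of_mem h
        rw [mem_ball, dist_comm] at ht
        linarith
      · have h1 : b θ ≤ dist θ t := infDist_le_dist_of_mem h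
        rw [mem_ball, dist_comm] at ht
        linarith
    have hθarc : γ θ ∈ γ '' ball θ (a θ) := ⟨θ, mem_ball_self hpos, rfl⟩
    have harcR : γ '' ball θ (a θ) ⊆ connectedComponentIn (A ∪ B)ᶜ (γ θ) :=
      ((convex_ball θ (a θ)).isPreconnected.image γ
        hγc.continuousOn).subset_connectedComponentIn hθarc harc
    have hclos : ∀ t, dist θ t = a θ → γ t ∈ closure (connectedComponentIn (A ∪ B)ᶜ (γ θ)) := by
      intro t ht
      have h1 : t ∈ closure (ball θ (a θ)) := by
        rw [closure_ball _ hpos.ne', mem_closedBall, dist_comm, ht]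
      exact closure_mono harcR (image_closure_subset_closure_image hγc ⟨t, h1, rfl⟩)
    refine hcon ⟨connectedComponentIn (A ∪ B)ᶜ (γ θ), hJ.isOpen_compl.connectedComponentIn,
      isPreconnected_connectedComponentIn, ?_, frontier_connectedComponentIn_compl_subset hJ _,
      ?_, ?_⟩
    -- A face leaving `ball c ρ` would cross the surrounding circle and so coincide with `E`.
    · intro w hw
      by_contra hwρ
      obtain ⟨v, hv, hvρ⟩ := (isPreconnected_connectedComponentIn
        (F := (A ∪ B)ᶜ) (x := γ θ)).intermediate_value (harcR hθarc) hw (f := fun z => dist z c)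
        (by fun_prop) (show ρ ∈ Icc (dist (γ θ) c) (dist w c) from
          ⟨(mem_ball.1 (hεball (sphere_subset_closedBall (hγs θ)))).le,
            by simpa using hwρ⟩)
      apply hzE
      rw [hE, connectedComponentIn_eq (hsphE hvρ), ← connectedComponentIn_eq hv]
      exact harcR hθarc
    · obtain ⟨t, ht, hd⟩ := hP.exists_infDist_eq_dist hPne θ
      exact ⟨γ t, ht, hγp t, hγq t, hclos t hd.symm⟩
    · obtain ⟨t, ht, hd⟩ := hQ.exists_infDist_eq_dist hQne θ
      exact ⟨γ t, ht, hγp t, hγq t, hclos t (hd.symm.trans hab.symm)⟩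
  obtain ⟨N, hN, hNc, hMN, hNE⟩ := exists_compact_connected hEo hEc
    (hSAc.inter hSBc) hME
  obtain ⟨g, hg, hgexp⟩ := exists_log_of_connected (hSAc.union hN) hBc (p := p) (q := q)
    (Set.disjoint_left.2 fun z hz hzB => hz.elim (fun h => hSAB z h hzB)
      fun h => hEJ (hNE h) (Or.inr hzB)) hpB hqB
  obtain ⟨g', hg', hgexp'⟩ := exists_log_of_connected (hSBc.union hN) hAc (p := p) (q := q)
    (Set.disjoint_left.2 fun z hz hzB => hz.elim (fun h => hSBA z h hzB)
      fun h => hEJ (hNE h) (Or.inl hzB)) hpA hqA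
  obtain ⟨k, hk1, hk⟩ : ∃ k : ℂ, Complex.exp k = 1 ∧ ∀ z ∈ N, g z = g' z + k := by
    have hexp : ∀ z ∈ N, Complex.exp (g z - g' z) = 1 := by
      intro z hz
      have h1 := (hgexp z (Or.inr hz)).symm.trans (hgexp' z (Or.inr hz))
      have h2 : z - q ≠ 0 := fun h => hEJ (hNE hz) (Or.inl ((sub_eq_zero.1 h) ▸ hqA))
      rw [Complex.exp_sub, mul_left_cancel₀ h2 h1, div_self (Complex.exp_ne_zero _)]
    rcases N.eq_empty_or_nonempty with h | ⟨n, hn⟩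
    · exact ⟨0, Complex.exp_zero, by simp [h]⟩
    · refine ⟨g n - g' n, hexp n hn, fun z hz => ?_⟩
      have := eq_of_exp_eq hNc (d := fun z => g z - g' z)
        ((hg.mono subset_union_right).sub (hg'.mono subset_union_right)) hexp hz hn
      linear_combination this
  classical
  -- The two logarithms, adjusted by the constant `k`, agree on `SA ∩ SB ⊆ N`.
  set G : ℂ → ℂ := fun z => if z ∈ SA then g z else g' z + k with hG
  have hGA : ∀ z ∈ SA, G z = g z := fun z hz => by simp [hG, hz]
  have hGB : ∀ z ∈ SB, G z = g' z + k := fun z hz => by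
    by_cases h : z ∈ SA
    · rw [hGA z h, hk z (hMN ⟨h, hz⟩)]
    · simp [hG, h]
  refine no_log_on_sphere hε hεq G (ContinuousOn.mono ?_ hcover) fun z hz => ?_
  · refine ContinuousOn.union_of_isClosed ?_ ?_ hSAc.isClosed hSBc.isClosed
    · exact (hg.mono subset_union_left).congr hGA
    · exact ((hg'.mono subset_union_left).add continuousOn_const).congr hGB
  · rcases hcover hz with h | h
    · rw [hGA z h, hgexp z (Or.inl h)]
    · rw [hGB z h, Complex.exp_add, hk1, mul_one, hgexp' z (Or.inl h)]

/-! ### Normal neighbourhoods -/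

/-- `U` is a relatively compact open set on which `f` is open, `f` is continuous up to the boundary
of `U`, and `r ≤ ‖f‖` on that boundary. Hence `f` restricted to `U` is a proper open map over the
disc of radius `r` around `0`. -/
structure IsNormalNhd (f : ℂ → ℂ) (U : Set ℂ) (r : ℝ) : Prop where
  isOpen : IsOpen U
  isCompact_closure : IsCompact (closure U)
  continuousOn : ContinuousOn f (closure U)
  isOpen_image : ∀ W ⊆ U, IsOpen W → IsOpen (f '' W)
  mem_of_norm_lt : ∀ z ∈ closure U, ‖f z‖ < r → z ∈ U

namespace IsNormalNhd

variable {f : ℂ → ℂ} {U : Set ℂ} {r : ℝ}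

theorem isOpen_inter_preimage (h : IsNormalNhd f U r) {S : Set ℂ} (hS : IsOpen S) :
    IsOpen (U ∩ f ⁻¹' S) :=
  (h.continuousOn.mono subset_closure).isOpen_inter_preimage h.isOpen hS

/-- The image of a component over `S` is open in `S`, and closed in `S` by properness. -/
theorem subset_image_component (h : IsNormalNhd f U r) {S : Set ℂ} (hS : IsOpen S)
    (hSc : IsPreconnected S) (hSr : S ⊆ ball 0 r) {z : ℂ} (hz : z ∈ U ∩ f ⁻¹' S) :
    S ⊆ f '' connectedComponentIn (U ∩ f ⁻¹' S) z := by
  set G := U ∩ f ⁻¹' S with hG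
  set C := connectedComponentIn G z with hC
  have hGo : IsOpen G := h.isOpen_inter_preimage hS
  have hCG : C ⊆ G := connectedComponentIn_subset _ _
  have hCU : closure C ⊆ closure U := closure_mono (hCG.trans inter_subset_left)
  have hCcomp : IsCompact (closure C) := h.isCompact_closure.of_isClosed_subset isClosed_closure hCU
  refine hSc.subset_of_closure_inter_subset
    (h.isOpen_image C (hCG.trans inter_subset_left) hGo.connectedComponentIn)
    ⟨f z, hz.2, z, mem_connectedComponentIn hz, rfl⟩ ?_
  rintro w ⟨hw, hwS⟩
  have hw' : w ∈ f '' closure C :=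
    closure_minimal (image_mono subset_closure)
      (hCcomp.image_of_continuousOn (h.continuousOn.mono hCU)).isClosed hw
  obtain ⟨c, hc, rfl⟩ := hw'
  have hcG : c ∈ G := ⟨h.mem_of_norm_lt c (hCU hc) (by simpa using hSr hwS), hwS⟩
  obtain ⟨v, hv1, hv2⟩ := mem_closure_iff.1 hc _ hGo.connectedComponentIn
    (mem_connectedComponentIn hcG)
  refine ⟨c, ?_, rfl⟩
  rw [hC, connectedComponentIn_eq hv2, ← connectedComponentIn_eq hv1]
  exact mem_connectedComponentIn hcG

/-- The components of `U ∩ f ⁻¹' S` are those of finitely many points `t ∈ T`: each of them meets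
the compact fibre over a chosen point of `S`. -/
theorem finite_components (h : IsNormalNhd f U r) {S : Set ℂ} (hS : IsOpen S)
    (hSc : IsPreconnected S) (hSr : S ⊆ ball 0 r) :
    ∃ T : Set ℂ, T.Finite ∧
      ∀ z ∈ U ∩ f ⁻¹' S, ∃ t ∈ T, z ∈ connectedComponentIn (U ∩ f ⁻¹' S) t := by
  rcases (U ∩ f ⁻¹' S).eq_empty_or_nonempty with hemp | ⟨z₀, hz₀⟩
  · exact ⟨∅, finite_empty, by simp [hemp]⟩
  have hGo : IsOpen (U ∩ f ⁻¹' S) := h.isOpen_inter_preimage hS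
  have hKc : IsCompact (closure U ∩ f ⁻¹' {f z₀}) :=
    h.isCompact_closure.of_isClosed_subset
      (h.continuousOn.preimage_isClosed_of_isClosed isClosed_closure isClosed_singleton)
      inter_subset_left
  have hKG : closure U ∩ f ⁻¹' {f z₀} ⊆ U ∩ f ⁻¹' S := by
    rintro z ⟨hz, hzf⟩
    have hzf : f z = f z₀ := hzf
    refine ⟨h.mem_of_norm_lt z hz ?_, ?_⟩
    · rw [hzf]; simpa using hSr hz₀.2
    · rw [mem_preimage, hzf]; exact hz₀.2
  obtain ⟨T, -, hT⟩ := hKc.elim_nhds_subcover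
    (fun z => connectedComponentIn (U ∩ f ⁻¹' S) z)
    (fun z hz => connectedComponentIn_mem_nhds (hGo.mem_nhds (hKG hz)))
  refine ⟨T, T.finite_toSet, fun z hz => ?_⟩
  obtain ⟨c, hc, hcf⟩ := h.subset_image_component hS hSc hSr hz hz₀.2
  have hcK : c ∈ closure U ∩ f ⁻¹' {f z₀} :=
    ⟨subset_closure (connectedComponentIn_subset _ _ hc).1, hcf⟩
  obtain ⟨t, ht, hct⟩ := mem_iUnion₂.1 (hT hcK)
  refine ⟨t, ht, ?_⟩
  rw [connectedComponentIn_eq hct, ← connectedComponentIn_eq hc]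
  exact mem_connectedComponentIn hz

/-- A limit point of a subset `D` of `U ∩ f ⁻¹' S` is a limit point of the trace of `D` on a
single component, since there are finitely many components. -/
theorem exists_component_of_mem_closure (h : IsNormalNhd f U r) {S : Set ℂ} (hS : IsOpen S)
    (hSc : IsPreconnected S) (hSr : S ⊆ ball 0 r) :
    ∃ T : Set ℂ, T.Finite ∧ ∀ D ⊆ U ∩ f ⁻¹' S, ∀ p ∈ closure D,
      ∃ t ∈ T, p ∈ closure (D ∩ connectedComponentIn (U ∩ f ⁻¹' S) t) := by
  obtain ⟨T, hT, hcov⟩ := h.finite_components hS hSc hSr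
  refine ⟨T, hT, fun D hD p hp => ?_⟩
  have h1 : D ⊆ ⋃ t ∈ T, D ∩ connectedComponentIn (U ∩ f ⁻¹' S) t := fun z hz => by
    obtain ⟨t, ht, hzt⟩ := hcov z (hD hz)
    exact mem_iUnion₂.2 ⟨t, ht, hz, hzt⟩
  have h2 := closure_mono h1 hp
  rw [hT.closure_biUnion] at h2
  obtain ⟨t, ht, hpt⟩ := mem_iUnion₂.1 h2
  exact ⟨t, ht, hpt⟩

theorem mem_closure_preimage (h : IsNormalNhd f U r) {S : Set ℂ} (hS : (0 : ℂ) ∈ closure S)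
    {p : ℂ} (hp : p ∈ U) (hfp : f p = 0) : p ∈ closure (U ∩ f ⁻¹' S) := by
  rw [_root_.mem_closure_iff]
  intro W hW hpW
  obtain ⟨w, ⟨z, ⟨hzU, hzW⟩, rfl⟩, hzS⟩ := mem_closure_iff.1 hS (f '' (U ∩ W))
    (h.isOpen_image _ inter_subset_left (h.isOpen.inter hW)) ⟨p, ⟨hp, hpW⟩, hfp⟩
  exact ⟨z, hzW, hzU, hzS⟩

/-! ### Accessibility of zeros -/

/-- A zero `p` in the closure of a component over the part `H ∩ ball 0 r` of the disc is the end of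
a continuum which is otherwise contained in that component and is not reduced to `{p}`. -/
theorem accessible (h : IsNormalNhd f U r) (hr : 0 < r)
    (htd : IsTotallyDisconnected (U ∩ f ⁻¹' {0})) {H : Set ℂ} (hH : IsOpen H) (hHc : Convex ℝ H)
    {p : ℂ} (hp : p ∈ U) (hfp : f p = 0) {t : ℂ}
    (ht : p ∈ closure (connectedComponentIn (U ∩ f ⁻¹' (H ∩ ball 0 r)) t)) :
    ∃ A, IsCompact A ∧ IsPreconnected A ∧ p ∈ A ∧
      (∀ z ∈ A, z ≠ p → z ∈ connectedComponentIn (U ∩ f ⁻¹' (H ∩ ball 0 r)) t) ∧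
      (A ∩ connectedComponentIn (U ∩ f ⁻¹' (H ∩ ball 0 r)) t).Nonempty := by
  -- `C n` below is a component over `S n`; these components decrease and have `p` in their closures.
  set S : ℕ → Set ℂ := fun n => H ∩ ball 0 (r / (n + 1)) with hS
  set G : ℕ → Set ℂ := fun n => U ∩ f ⁻¹' S n with hG
  have hrn : ∀ n : ℕ, 0 < r / (n + 1) := fun n => by positivity
  have hSo : ∀ n, IsOpen (S n) := fun n => hH.inter isOpen_ball
  have hSc : ∀ n, IsPreconnected (S n) := fun n => (hHc.inter (convex_ball _ _)).isPreconnected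
  have hranti : ∀ n : ℕ, r / ((n + 1 : ℕ) + 1) ≤ r / (n + 1) := fun n => by
    gcongr; simp
  have hSanti : ∀ n, S (n + 1) ⊆ S n := fun n =>
    inter_subset_inter_right _ (ball_subset_ball (hranti n))
  have hSr : ∀ n, S n ⊆ ball 0 r := fun n => inter_subset_right.trans
    (ball_subset_ball (div_le_self hr.le (by simp)))
  have hGo : ∀ n, IsOpen (G n) := fun n => h.isOpen_inter_preimage (hSo n)
  have hG0 : G 0 = U ∩ f ⁻¹' (H ∩ ball 0 r) := by simp [hG, hS]
  rw [← hG0] at ht ⊢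
  have step : ∀ n t, p ∈ closure (connectedComponentIn (G n) t) →
      ∃ t', p ∈ closure (connectedComponentIn (G (n + 1)) t') ∧
        connectedComponentIn (G (n + 1)) t' ⊆ connectedComponentIn (G n) t := by
    intro n t ht
    obtain ⟨T, -, hT⟩ := h.exists_component_of_mem_closure (hSo (n + 1)) (hSc (n + 1))
      (hSr (n + 1))
    have hnhds : f ⁻¹' ball 0 (r / ((n + 1 : ℕ) + 1)) ∈ 𝓝 p := by
      have hcont : ContinuousAt f p := h.continuousOn.continuousAt
        (mem_of_superset (h.isOpen.mem_nhds hp) subset_closure)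
      exact hcont (by rw [hfp]; exact ball_mem_nhds _ (hrn (n + 1)))
    have hpc : p ∈ closure (connectedComponentIn (G n) t ∩ G (n + 1)) := by
      rw [mem_closure_iff_nhds] at ht ⊢
      intro W hW
      obtain ⟨z, ⟨hzW, hzb⟩, hzC⟩ := ht _ (inter_mem hW hnhds)
      have hzG := connectedComponentIn_subset _ _ hzC
      exact ⟨z, hzW, hzC, hzG.1, hzG.2.1, hzb⟩
    obtain ⟨t', -, ht'⟩ := hT _ inter_subset_right p hpc
    refine ⟨t', closure_mono inter_subset_right ht', ?_⟩
    obtain ⟨z, ⟨hzC, -⟩, hzC'⟩ := closure_nonempty_iff.1 ⟨p, ht'⟩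
    rw [connectedComponentIn_eq hzC]
    exact isPreconnected_connectedComponentIn.subset_connectedComponentIn hzC'
      ((connectedComponentIn_subset _ _).trans
        (inter_subset_inter_right _ (preimage_mono (hSanti n))))
  choose! nx hnx1 hnx2 using step
  set τ : ℕ → ℂ := fun n => Nat.rec t (fun n t => nx n t) n with hτ
  have hτp : ∀ n, p ∈ closure (connectedComponentIn (G n) (τ n)) := by
    intro n
    induction n with
    | zero => exact ht
    | succ n ih => exact hnx1 n _ ih
  set C : ℕ → Set ℂ := fun n => connectedComponentIn (G n) (τ n) with hC
  have hCstep : ∀ n, C (n + 1) ⊆ C n := fun n => hnx2 n _ (hτp n)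
  have hCanti : Antitone C := antitone_nat_of_succ_le hCstep
  have hCG : ∀ n, C n ⊆ G n := fun n => connectedComponentIn_subset _ _
  have hCU : ∀ n, closure (C n) ⊆ closure U := fun n =>
    closure_mono ((hCG n).trans inter_subset_left)
  have hCcomp : ∀ n, IsCompact (closure (C n)) := fun n =>
    h.isCompact_closure.of_isClosed_subset isClosed_closure (hCU n)
  have hCne : ∀ n, (C n).Nonempty := fun n => closure_nonempty_iff.1 ⟨p, hτp n⟩
  have hCpath : ∀ n, IsPathConnected (C n) := fun n =>
    ((hGo n).connectedComponentIn).isConnected_iff_isPathConnected.1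
      ⟨hCne n, isPreconnected_connectedComponentIn⟩
  have hclanti : Antitone fun n => closure (C n) := fun m n hmn => closure_mono (hCanti hmn)
  -- The nested closures intersect in a connected set of zeros, which is therefore `{p}`.
  have hinter : ∀ z, (∀ n, z ∈ closure (C n)) → z = p := by
    have hpre : IsPreconnected (⋂ n, closure (C n)) :=
      isPreconnected_iInter_nested hclanti hCcomp
        (fun n => isPreconnected_connectedComponentIn.closure)
    have hsub : (⋂ n, closure (C n)) ⊆ U ∩ f ⁻¹' {0} := by
      intro z hz
      rw [mem_iInter] at hz
      have hzU : z ∈ closure U := hCU 0 (hz 0)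
      have hle : ∀ n : ℕ, ‖f z‖ ≤ r / (n + 1) := by
        intro n
        have h1 : f z ∈ closure (f '' C n) :=
          ((h.continuousOn z hzU).mono (subset_closure.trans (hCU n))).mem_closure_image (hz n)
        have h2 : f '' C n ⊆ closedBall 0 (r / (n + 1)) := by
          rintro _ ⟨w, hw, rfl⟩
          exact ball_subset_closedBall (hCG n hw).2.2
        simpa using closure_minimal h2 isClosed_closedBall h1
      have hlim : Tendsto (fun n : ℕ => r / ((n : ℝ) + 1)) atTop (𝓝 0) :=
        tendsto_const_nhds.div_atTop
          (tendsto_atTop_add_const_right _ _ tendsto_natCast_atTop_atTop)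
      have h0 : ‖f z‖ ≤ 0 := ge_of_tendsto' hlim hle
      have hfz : f z = 0 := norm_le_zero_iff.1 h0
      exact ⟨h.mem_of_norm_lt z hzU (by simpa [hfz] using hr), hfz⟩
    intro z hz
    exact htd _ hsub hpre (mem_iInter.2 hz) (mem_iInter.2 hτp)
  -- The continuum consists of `p` and of paths `P n` in `C n` joining `w n` to `w (n + 1)`.
  choose w hw using hCne
  have hjoin : ∀ n, ∃ P, IsCompact P ∧ IsPreconnected P ∧ P ⊆ C n ∧ w n ∈ P ∧ w (n + 1) ∈ P := by
    intro n
    obtain ⟨γ, hγ⟩ := (hCpath n).joinedIn (w n) (hw n) (w (n + 1)) (hCstep n (hw (n + 1)))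
    exact ⟨range γ, isCompact_range γ.continuous, isPreconnected_range γ.continuous,
      by rintro _ ⟨s, rfl⟩; exact hγ s, ⟨0, γ.source⟩, ⟨1, γ.target⟩⟩
  choose P hPc hPp hPC hPw hPw' using hjoin
  have hwp : p ∈ closure (⋃ n, P n) := by
    rw [_root_.mem_closure_iff]
    intro W hW hpW
    obtain ⟨n, hn⟩ := exists_subset_nhds_of_isCompact hclanti.directed_ge hCcomp (U := W)
      (fun z hz => by rw [hinter z (mem_iInter.1 hz)]; exact hW.mem_nhds hpW)
    exact ⟨w n, hn (subset_closure (hw n)), mem_iUnion.2 ⟨n, hPw n⟩⟩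
  refine ⟨insert p (⋃ n, P n), ?_, ?_, mem_insert _ _, ?_, ?_⟩
  -- This presentation as an intersection of compact sets gives compactness.
  · have heq : insert p (⋃ n, P n) = ⋂ n, ((⋃ k ∈ Finset.range n, P k) ∪ closure (C n)) := by
      apply Subset.antisymm
      · rintro z (rfl | hz)
        · exact mem_iInter.2 fun n => Or.inr (hτp n)
        · obtain ⟨k, hk⟩ := mem_iUnion.1 hz
          refine mem_iInter.2 fun n => ?_
          rcases lt_or_ge k n with hkn | hkn
          · exact Or.inl (mem_iUnion₂.2 ⟨k, Finset.mem_range.2 hkn, hk⟩)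
          · exact Or.inr (subset_closure (hCanti hkn (hPC k hk)))
      · intro z hz
        by_cases hzP : z ∈ ⋃ n, P n
        · exact Or.inr hzP
        · refine Or.inl (hinter z fun n => (mem_iInter.1 hz n).resolve_left fun hcon => hzP ?_)
          obtain ⟨k, -, hk⟩ := mem_iUnion₂.1 hcon
          exact mem_iUnion.2 ⟨k, hk⟩
    have hcl : ∀ n, IsCompact ((⋃ k ∈ Finset.range n, P k) ∪ closure (C n)) := fun n =>
      ((Finset.range n).isCompact_biUnion fun k _ => hPc k).union (hCcomp n)
    rw [heq]
    exact (hcl 0).of_isClosed_subset (isClosed_iInter fun n => (hcl n).isClosed)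
      (iInter_subset _ 0)
  · refine (IsPreconnected.iUnion_of_chain hPp fun n =>
      ⟨w (n + 1), hPw' n, hPw (n + 1)⟩).subset_closure (subset_insert _ _) ?_
    exact insert_subset hwp subset_closure
  · rintro z (rfl | hz) hzp
    · exact absurd rfl hzp
    · obtain ⟨k, hk⟩ := mem_iUnion.1 hz
      exact hCanti (Nat.zero_le k) (hPC k hk)
  · exact ⟨w 0, Or.inr (mem_iUnion.2 ⟨0, hPw 0⟩), hw 0⟩

/-- Two zeros in the closure of the same component over `H ∩ ball 0 r` are joined by a continuum in
`U` which `f` maps into `H`, its two ends excepted. -/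
theorem exists_continuum (h : IsNormalNhd f U r) (hr : 0 < r)
    (htd : IsTotallyDisconnected (U ∩ f ⁻¹' {0})) {H : Set ℂ} (hH : IsOpen H) (hHc : Convex ℝ H)
    {p q : ℂ} (hp : p ∈ U) (hfp : f p = 0) (hq : q ∈ U) (hfq : f q = 0) {t : ℂ}
    (htp : p ∈ closure (connectedComponentIn (U ∩ f ⁻¹' (H ∩ ball 0 r)) t))
    (htq : q ∈ closure (connectedComponentIn (U ∩ f ⁻¹' (H ∩ ball 0 r)) t)) :
    ∃ A, IsCompact A ∧ IsPreconnected A ∧ p ∈ A ∧ q ∈ A ∧ A ⊆ U ∧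
      ∀ z ∈ A, z ≠ p → z ≠ q → f z ∈ H := by
  obtain ⟨A, hA, hAc, hpA, hAC, a, haA, haC⟩ := h.accessible hr htd hH hHc hp hfp htp
  obtain ⟨B, hB, hBc, hqB, hBC, b, hbB, hbC⟩ := h.accessible hr htd hH hHc hq hfq htq
  set C := connectedComponentIn (U ∩ f ⁻¹' (H ∩ ball 0 r)) t with hC
  have hCG : C ⊆ U ∩ f ⁻¹' (H ∩ ball 0 r) := connectedComponentIn_subset _ _
  have hCpath : IsPathConnected C :=
    ((h.isOpen_inter_preimage (hH.inter isOpen_ball)).connectedComponentIn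
      ).isConnected_iff_isPathConnected.1 ⟨⟨a, haC⟩, isPreconnected_connectedComponentIn⟩
  obtain ⟨γ, hγ⟩ := hCpath.joinedIn a haC b hbC
  have key : ∀ z ∈ A ∪ range γ ∪ B, z = p ∨ z = q ∨ z ∈ C := by
    rintro z ((hz | ⟨s, rfl⟩) | hz)
    · by_cases hzp : z = p
      · exact Or.inl hzp
      · exact Or.inr (Or.inr (hAC z hz hzp))
    · exact Or.inr (Or.inr (hγ s))
    · by_cases hzq : z = q
      · exact Or.inr (Or.inl hzq)
      · exact Or.inr (Or.inr (hBC z hz hzq))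
  refine ⟨A ∪ range γ ∪ B, (hA.union (isCompact_range γ.continuous)).union hB, ?_,
    Or.inl (Or.inl hpA), Or.inr hqB, ?_, ?_⟩
  · have h0 : a ∈ range γ := ⟨0, γ.source⟩
    have h1 : b ∈ range γ := ⟨1, γ.target⟩
    exact (hAc.union a haA h0 (isPreconnected_range γ.continuous)).union b (Or.inr h1) hbB hBc
  · intro z hz
    rcases key z hz with rfl | rfl | hz
    exacts [hp, hq, (hCG hz).1]
  · intro z hz hzp hzq
    rcases key z hz with h | h | hz
    exacts [absurd h hzp, absurd h hzq, (hCG hz).2.1]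

end IsNormalNhd

/-! ### Isolated zeros -/

/-- No bounded domain `R`, on whose boundary `f` takes no real value other than `0`, has in its
closure both points with `0 < im f` and points with `im f < 0`. -/
theorem no_face {f : ℂ → ℂ} {c : ℂ} {ρ : ℝ} (hf : ContinuousOn f (closedBall c ρ))
    (hopen : ∀ W ⊆ ball c ρ, IsOpen W → IsOpen (f '' W)) {R : Set ℂ} (hR : IsOpen R)
    (hRc : IsPreconnected R) (hRb : R ⊆ ball c ρ)
    (hfr : ∀ z ∈ frontier R, (f z).im = 0 → f z = 0)
    (hpos : ∃ a ∈ closure R, 0 < (f a).im) (hneg : ∃ b ∈ closure R, (f b).im < 0) : False := by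
  have hRcl : closure R ⊆ closedBall c ρ :=
    closure_minimal (hRb.trans ball_subset_closedBall) isClosed_closedBall
  have hRcomp : IsCompact (closure R) :=
    (isCompact_closedBall c ρ).of_isClosed_subset isClosed_closure hRcl
  have hfRo : IsOpen (f '' R) := hopen R hRb hR
  have himg : IsCompact (f '' closure R) := hRcomp.image_of_continuousOn (hf.mono hRcl)
  -- The open half axis through a nonzero real point of the bounded set `f '' R` avoids the boundary
  -- of that set, so it would be contained in it.
  have hnz : ∀ u : ℝ, u ≠ 0 → (u : ℂ) ∉ f '' R := by
    intro u hu huR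
    have hline : Continuous fun s : ℝ => ((s * u : ℝ) : ℂ) := by fun_prop
    have hray : Ioi (0 : ℝ) ⊆ (fun s : ℝ => ((s * u : ℝ) : ℂ)) ⁻¹' (f '' R) := by
      refine isPreconnected_Ioi.subset_of_closure_inter_subset (hfRo.preimage hline)
        ⟨1, by simp, by simpa using huR⟩ ?_
      rintro s ⟨hs, hs0⟩
      have h1 : ((s * u : ℝ) : ℂ) ∈ f '' closure R :=
        closure_minimal (image_mono subset_closure) himg.isClosed
          (hline.closure_preimage_subset _ hs)
      obtain ⟨z, hz, hzs⟩ := h1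
      by_cases hzR : z ∈ R
      · exact ⟨z, hzR, hzs⟩
      · have h0 := hfr z ⟨hz, by rwa [hR.interior_eq]⟩ (by rw [hzs, Complex.ofReal_im])
        rw [hzs, Complex.ofReal_eq_zero] at h0
        exact absurd h0 (mul_ne_zero (ne_of_gt hs0) hu)
    obtain ⟨b, hb⟩ := himg.isBounded.exists_norm_le
    have hu' : 0 < |u| := abs_pos.2 hu
    have hs : 0 < (|b| + 1) / |u| := by positivity
    have h1 := hb _ (image_mono subset_closure (hray hs))
    simp only [Complex.norm_real, Real.norm_eq_abs, abs_mul, abs_div, abs_abs] at h1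
    rw [div_mul_cancel₀ _ hu'.ne'] at h1
    rw [abs_of_pos (by positivity : 0 < |b| + 1)] at h1
    linarith [le_abs_self b]
  have hnr : ∀ w ∈ f '' R, w.im ≠ 0 := by
    intro w hw hwim
    have hwre : w = (w.re : ℂ) := by
      apply Complex.ext <;> simp [hwim]
    by_cases hre : w.re = 0
    · have hw0 : w = 0 := by rw [hwre, hre]; simp
      rw [hw0] at hw
      obtain ⟨δ, hδ, hball⟩ := Metric.isOpen_iff.1 hfRo 0 hw
      refine hnz (δ / 2) (by positivity) (hball ?_)
      rw [mem_ball, dist_zero_right, Complex.norm_real, Real.norm_eq_abs,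
        abs_of_pos (by positivity)]
      linarith
    · exact hnz w.re hre (hwre ▸ hw)
  have hnear : ∀ O : Set ℂ, IsOpen O → (∃ a ∈ closure R, f a ∈ O) → ∃ z ∈ R, f z ∈ O := by
    rintro O hO ⟨a, ha, haO⟩
    have h1 : f a ∈ closure (f '' R) :=
      ((hf a (hRcl ha)).mono (hRb.trans ball_subset_closedBall)).mem_closure_image ha
    obtain ⟨_, hw, z, hz, rfl⟩ := mem_closure_iff.1 h1 O hO haO
    exact ⟨z, hz, hw⟩
  obtain ⟨a, ha, hapos⟩ := hnear {w | 0 < w.im} (isOpen_lt continuous_const Complex.continuous_im)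
    hpos
  obtain ⟨b, hb, hbneg⟩ := hnear {w | w.im < 0} (isOpen_lt Complex.continuous_im continuous_const)
    hneg
  obtain ⟨z, hz, hz0⟩ := hRc.intermediate_value hb ha (f := fun z => (f z).im)
    (Complex.continuous_im.comp_continuousOn (hf.mono (hRb.trans ball_subset_closedBall)))
    (show (0 : ℝ) ∈ Icc _ _ from ⟨le_of_lt hbneg, le_of_lt hapos⟩)
  exact hnr _ ⟨z, hz, rfl⟩ hz0

/-- A point of a compact totally disconnected zero set has a clopen neighbourhood in it that stays
away from the bounding circle; `U` separates this clopen set from the remaining zeros. -/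
theorem exists_normalNhd {f : ℂ → ℂ} {x : ℂ} {ρ : ℝ} (hρ : 0 < ρ)
    (hf : ContinuousOn f (closedBall x ρ))
    (hopen : ∀ W ⊆ ball x ρ, IsOpen W → IsOpen (f '' W)) (hfx : f x = 0)
    (htd : IsTotallyDisconnected (closedBall x ρ ∩ f ⁻¹' {0})) :
    ∃ U r, 0 < r ∧ IsNormalNhd f U r ∧ x ∈ U ∧ U ⊆ ball x ρ := by
  set K := closedBall x ρ ∩ f ⁻¹' {0} with hK
  have hKc : IsCompact K := (isCompact_closedBall x ρ).of_isClosed_subset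
    (hf.preimage_isClosed_of_isClosed isClosed_closedBall isClosed_singleton) inter_subset_left
  have hxK : x ∈ K := ⟨mem_closedBall_self hρ.le, hfx⟩
  have : CompactSpace K := isCompact_iff_compactSpace.1 hKc
  have : TotallyDisconnectedSpace K := totallyDisconnectedSpace_subtype_iff.2 htd
  obtain ⟨V, hV, hxV, hVb⟩ := compact_exists_isClopen_in_isOpen (x := (⟨x, hxK⟩ : K))
    (U := ((↑) : K → ℂ) ⁻¹' ball x ρ) (isOpen_ball.preimage continuous_subtype_val)
    (mem_ball_self hρ)
  have hVc : IsCompact (((↑) : K → ℂ) '' V) := hV.1.isCompact.image continuous_subtype_val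
  have hVc' : IsCompact (((↑) : K → ℂ) '' Vᶜ) :=
    hV.2.isClosed_compl.isCompact.image continuous_subtype_val
  obtain ⟨U, hU, hVU, hUcl, hUc⟩ := exists_open_between_and_isCompact_closure hVc
    (isOpen_ball.inter hVc'.isClosed.isOpen_compl : IsOpen (ball x ρ ∩ (((↑) : K → ℂ) '' Vᶜ)ᶜ))
    (by
      rintro _ ⟨z, hz, rfl⟩
      refine ⟨hVb hz, ?_⟩
      rintro ⟨z', hz', heq⟩
      exact hz' (Subtype.ext heq ▸ hz))
  have hUb : closure U ⊆ ball x ρ := hUcl.trans inter_subset_left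
  have hfU : ContinuousOn f (closure U) := hf.mono (hUb.trans ball_subset_closedBall)
  have hfrc : IsCompact (closure U \ U) := hUc.diff hU
  have hne : ∀ z ∈ closure U \ U, 0 < ‖f z‖ := by
    rintro z ⟨hz, hzU⟩
    rw [norm_pos_iff]
    intro hfz
    have hzK : z ∈ K := ⟨ball_subset_closedBall (hUb hz), hfz⟩
    by_cases hzV : (⟨z, hzK⟩ : K) ∈ V
    · exact hzU (hVU ⟨_, hzV, rfl⟩)
    · exact (hUcl hz).2 ⟨⟨z, hzK⟩, hzV, rfl⟩
  obtain ⟨r, hr, hrle⟩ := hfrc.exists_forall_le' (hfU.mono sdiff_subset).norm hne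
  refine ⟨U, r, hr, ⟨hU, hUc, hfU, fun W hW => hopen W (hW.trans (subset_closure.trans hUb)),
    fun z hz hzr => ?_⟩, hVU ⟨_, hxV, rfl⟩, subset_closure.trans hUb⟩
  by_contra hzU
  exact absurd (hrle z ⟨hz, hzU⟩) (not_le.2 hzr)

/-- A zero of a continuous open map with totally disconnected zero set has a neighbourhood
containing only finitely many zeros. -/
theorem exists_nhd_finite_zeros {f : ℂ → ℂ} {x : ℂ} {ρ : ℝ} (hρ : 0 < ρ)
    (hf : ContinuousOn f (closedBall x ρ))
    (hopen : ∀ W ⊆ ball x ρ, IsOpen W → IsOpen (f '' W)) (hfx : f x = 0)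
    (htd : IsTotallyDisconnected (closedBall x ρ ∩ f ⁻¹' {0})) :
    ∃ U, IsOpen U ∧ x ∈ U ∧ U ⊆ ball x ρ ∧ (U ∩ f ⁻¹' {0}).Finite := by
  obtain ⟨U, r, hr, h, hxU, hUb⟩ := exists_normalNhd hρ hf hopen hfx htd
  refine ⟨U, h.isOpen, hxU, hUb, ?_⟩
  by_contra hinf
  have htdU : IsTotallyDisconnected (U ∩ f ⁻¹' {0}) := fun s hs =>
    htd s (hs.trans (inter_subset_inter_left _ (hUb.trans ball_subset_closedBall)))
  set Hp : Set ℂ := {w | 0 < w.im} with hHp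
  set Hm : Set ℂ := {w | w.im < 0} with hHm
  have hHpo : IsOpen Hp := isOpen_lt continuous_const Complex.continuous_im
  have hHmo : IsOpen Hm := isOpen_lt Complex.continuous_im continuous_const
  have hHpc : Convex ℝ Hp := convex_halfSpace_im_gt 0
  have hHmc : Convex ℝ Hm := convex_halfSpace_im_lt 0
  have h0 : ∀ H : Set ℂ, (0 : ℂ) ∈ closure H → (0 : ℂ) ∈ closure (H ∩ ball 0 r) := by
    intro H hH
    rw [mem_closure_iff_nhds] at hH ⊢
    intro W hW
    obtain ⟨z, ⟨hzW, hzb⟩, hzH⟩ := hH _ (inter_mem hW (ball_mem_nhds 0 hr))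
    exact ⟨z, hzW, hzH, hzb⟩
  have h0p : (0 : ℂ) ∈ closure Hp := by
    rw [hHp, Complex.closure_setOfPred_lt_im]; simp
  have h0m : (0 : ℂ) ∈ closure Hm := by
    rw [hHm, Complex.closure_setOfPred_im_lt]; simp
  obtain ⟨Tp, hTp, hcp⟩ := h.exists_component_of_mem_closure (hHpo.inter isOpen_ball)
    (hHpc.inter (convex_ball 0 r)).isPreconnected inter_subset_right
  obtain ⟨Tm, hTm, hcm⟩ := h.exists_component_of_mem_closure (hHmo.inter isOpen_ball)
    (hHmc.inter (convex_ball 0 r)).isPreconnected inter_subset_right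
  have hexp : ∀ p ∈ U ∩ f ⁻¹' {0}, ∃ t ∈ Tp,
      p ∈ closure (connectedComponentIn (U ∩ f ⁻¹' (Hp ∩ ball 0 r)) t) := fun p hp => by
    obtain ⟨t, ht, hpt⟩ := hcp _ Subset.rfl p (h.mem_closure_preimage (h0 _ h0p) hp.1 hp.2)
    exact ⟨t, ht, closure_mono inter_subset_right hpt⟩
  have hexm : ∀ p ∈ U ∩ f ⁻¹' {0}, ∃ t ∈ Tm,
      p ∈ closure (connectedComponentIn (U ∩ f ⁻¹' (Hm ∩ ball 0 r)) t) := fun p hp => by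
    obtain ⟨t, ht, hpt⟩ := hcm _ Subset.rfl p (h.mem_closure_preimage (h0 _ h0m) hp.1 hp.2)
    exact ⟨t, ht, closure_mono inter_subset_right hpt⟩
  choose! tp htpT htp using hexp
  choose! tm htmT htm using hexm
  -- Two distinct zeros adhere to the same component on the upper and on the lower side.
  obtain ⟨p, hp, q, hq, hpq, heq⟩ := Set.Infinite.exists_ne_map_eq_of_mapsTo hinf
    (f := fun p => (tp p, tm p)) (t := Tp ×ˢ Tm) (fun p hp => ⟨htpT p hp, htmT p hp⟩)
    (hTp.prod hTm)
  obtain ⟨heqp, heqm⟩ := Prod.mk.inj heq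
  obtain ⟨A, hA, hAc, hpA, hqA, hAU, hAH⟩ := h.exists_continuum hr htdU hHpo hHpc hp.1 hp.2
    hq.1 hq.2 (htp p hp) (heqp ▸ htp q hq)
  obtain ⟨B, hB, hBc, hpB, hqB, hBU, hBH⟩ := h.exists_continuum hr htdU hHmo hHmc hp.1 hp.2
    hq.1 hq.2 (htm p hp) (heqm ▸ htm q hq)
  have hAB : A ∩ B ⊆ {p, q} := by
    rintro z ⟨hzA, hzB⟩
    by_contra hz
    simp only [mem_insert_iff, mem_singleton_iff, not_or] at hz
    have h1 : 0 < (f z).im := hAH z hzA hz.1 hz.2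
    have h2 : (f z).im < 0 := hBH z hzB hz.1 hz.2
    exact lt_asymm h1 h2
  obtain ⟨R, hR, hRc, hRb, hfr, ⟨a, haA, hap, haq, haR⟩, b, hbB, hbp, hbq, hbR⟩ :=
    exists_bounded_face hA hB hAc hBc hpq hpA hqA hpB hqB hAB
      (union_subset (hAU.trans hUb) (hBU.trans hUb))
  refine no_face hf hopen hR hRc hRb (fun z hz him => ?_) ⟨a, haR, hAH a haA hap haq⟩
    ⟨b, hbR, hBH b hbB hbp hbq⟩
  by_cases hzp : z = p
  · rw [hzp]; exact hp.2
  by_cases hzq : z = q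
  · rw [hzq]; exact hq.2
  rcases hfr hz with hzA | hzB
  · exact absurd him (ne_of_gt (hAH z hzA hzp hzq))
  · exact absurd him (ne_of_lt (hBH z hzB hzp hzq))

end Stoilow

/-- **Stoïlow's discreteness theorem.** A continuous, light, open map on a
planar domain is discrete: every fiber is a discrete subset of the domain. -/
theorem stoilow_light_open_implies_discrete
    (Ω : Set ℂ) (hΩopen : IsOpen Ω) (hΩconn : IsConnected Ω)
    (f : ℂ → ℂ)
    (hcont : ContinuousOn f Ω)
    (hlight : ∀ y : ℂ, IsTotallyDisconnected (Ω ∩ f ⁻¹' {y}))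
    (hopen : ∀ U : Set ℂ, U ⊆ Ω → IsOpen U → IsOpen (f '' U)) :
    ∀ y : ℂ, ∀ x ∈ Ω ∩ f ⁻¹' {y},
      ∃ V : Set ℂ, IsOpen V ∧ x ∈ V ∧ V ∩ (Ω ∩ f ⁻¹' {y}) = {x} := by
  rintro y x ⟨hxΩ, hfx⟩
  obtain ⟨ρ, hρ, hρΩ⟩ := Metric.nhds_basis_closedBall.mem_iff.1 (hΩopen.mem_nhds hxΩ)
  have hpre : (fun z => f z - y) ⁻¹' {0} = f ⁻¹' {y} := by
    ext z; simp [sub_eq_zero]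
  obtain ⟨U, hU, hxU, hUb, hfin⟩ := Stoilow.exists_nhd_finite_zeros (f := fun z => f z - y) hρ
    ((hcont.mono hρΩ).sub continuousOn_const)
    (fun W hW hWo => by
      have h1 := hopen W ((hW.trans Metric.ball_subset_closedBall).trans hρΩ) hWo
      have h2 := (Homeomorph.subRight y).isOpenMap _ h1
      rwa [Set.image_image] at h2)
    (sub_eq_zero.2 hfx)
    (by
      rw [hpre]
      exact fun s hs => hlight y s (hs.trans (Set.inter_subset_inter_left _ hρΩ)))
  rw [hpre] at hfin
  refine ⟨U \ ((U ∩ f ⁻¹' {y}) \ {x}), hU.sdiff hfin.sdiff.isClosed, ⟨hxU, by simp⟩, ?_⟩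
  ext z
  constructor
  · rintro ⟨⟨hzU, hz⟩, -, hzy⟩
    by_contra hzx
    exact hz ⟨⟨hzU, hzy⟩, hzx⟩
  · rintro rfl
    exact ⟨⟨hxU, by simp⟩, hxΩ, hfx⟩
end

section
/- Let Ω be a domain (open connected set) in ℂ and let f : Ω → ℂ be a continuous, open, and discrete mapping. Then the branch set B_f of f, i.e. the set of points x ∈ Ω at which f fails to be a local homeomorphism, is a discrete subset of Ω. -/
/-!
The proof shows that each point `x₀ ∈ Ω` has a neighbourhood `U` such that `f` is injective near
every `q ∈ U` other than `x₀`; an injective continuous open map is a homeomorphism onto its image.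

Take for `U` a normal neighbourhood of `x₀`: `f` maps `U` properly onto a disc `D` around `f x₀`, and
`x₀` is the only point of `U` over `f x₀` (`IsOpenDiscrete.exists_normal`,
`IsProperOpen.of_closedBall`). The geometric heart is `IsOpenDiscrete.no_double_arc`: two arcs in `U`
which start at the same point `q` with `f q ≠ f x₀` and lie over the same segment meet again.
Otherwise, as the preimage of a suitably slit `D` is connected (each of its components contains
`x₀`), the arcs can be closed up to a closed curve whose image avoids an open ray from `f q`. The
inside of the curve has bounded image, which then also avoids this ray; but close to `q` the inside
is mapped onto a full small disc around `f q` slit along the segment, a contradiction. Only a weak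
form of the Jordan curve theorem is needed (`exists_inside`), proved by lifting through the covering
`exp`.

To pass from arcs to injectivity, take a normal neighbourhood `V` of `q` inside `U \ {x₀}` and count
the preimages in `V` of the points of a segment in the target disc. The count is lower
semicontinuous. Over an open interval on which it is constant, `f` is a covering, and its disjoint
sections have distinct limits at the end points by the previous paragraph, so the count has the same
value there (`IsProperOpen.ncard_left`). A Baire category argument (`constant_of_lsc`) shows that
such a function is constant. As `q` is the only point of `V` over `f q`, the count is `1` everywhere.
-/

/-- The branch set of `f` on `Ω`: the set of points of `Ω` at which `f` fails to be a
local homeomorphism, i.e. at which there is no open neighbourhood `U ⊆ Ω` of the point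
on which `f` restricts to a homeomorphism onto an open subset of `ℂ`. -/
def branchSet (f : ℂ → ℂ) (Ω : Set ℂ) : Set ℂ :=
  {x ∈ Ω | ¬ ∃ U : Set ℂ, IsOpen U ∧ x ∈ U ∧ U ⊆ Ω ∧
      ∃ e : PartialHomeomorph ℂ ℂ, e.source = U ∧ Set.EqOn f (↑e) U}

section

open Set Filter Topology Complex

/-! ### A weak Jordan curve theorem -/

/-- Off a path from `a` to `b`, the function `(z - b) / (z - a)` has a continuous logarithm: the
homotopy `t ↦ (z - α t) / (z - α 0)` starts at the constant `1` and lifts through `exp`. -/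
theorem exists_log_path {a b : ℂ} (α : Path a b) :
    ∃ h : ℂ → ℂ, ContinuousOn h (range α)ᶜ ∧
      ∀ z ∈ (range α)ᶜ, exp (h z) = (z - b) / (z - a) := by
  have hne : ∀ (t : unitInterval) (z : ((range α)ᶜ : Set ℂ)), (z : ℂ) - α t ≠ 0 := by
    intro t z h
    exact z.2 ⟨t, (sub_eq_zero.1 h).symm⟩
  let H : C(unitInterval × ((range α)ᶜ : Set ℂ), {z : ℂ // z ≠ 0}) :=
    ⟨fun x => ⟨((x.2 : ℂ) - α x.1) / ((x.2 : ℂ) - α 0), div_ne_zero (hne _ _) (hne _ _)⟩, by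
      refine Continuous.subtype_mk ?_ _
      refine Continuous.div (by fun_prop) (by fun_prop) ?_
      intro x; exact hne _ _⟩
  have H0 : ∀ z, H (0, z) = (⟨exp ((ContinuousMap.const _ (0:ℂ) : C(((range α)ᶜ : Set ℂ), ℂ)) z),
      exp_ne_zero _⟩ : {z : ℂ // z ≠ 0}) := by
    intro z
    apply Subtype.ext
    simp only [H, ContinuousMap.coe_mk, ContinuousMap.const_apply, exp_zero]
    exact div_self (hne 0 z)
  let G := isCoveringMap_exp.liftHomotopy H (ContinuousMap.const _ (0:ℂ)) H0
  have hG := isCoveringMap_exp.liftHomotopy_lifts H (ContinuousMap.const _ (0:ℂ)) H0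
  classical
  refine ⟨fun z => if hz : z ∈ (range α)ᶜ then G (1, ⟨z, hz⟩) else 0, ?_, ?_⟩
  · rw [continuousOn_iff_continuous_domRestrict]
    have : ((range α)ᶜ).domRestrict (fun z => if hz : z ∈ (range α)ᶜ then G (1, ⟨z, hz⟩) else 0)
      = fun z => G (1, z) := by
      funext z
      exact dif_pos z.2
    rw [this]
    fun_prop
  · intro z hz
    simp only [dif_pos hz]
    have h1 : exp (G (1, ⟨z, hz⟩)) = (z - α 1) / (z - α 0) :=
      congrArg Subtype.val (congrFun hG (1, ⟨z, hz⟩))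
    rw [h1, α.target, α.source]

/-- Around its pole `q`, the function `(z - p) / (z - q)` has no continuous logarithm, since it winds
around `0` along small circles centred at `q`. -/
theorem no_log_pole {q p : ℂ} (hqp : q ≠ p) {V : Set ℂ} (hV : V ∈ 𝓝 q) (h : ℂ → ℂ)
    (hc : ContinuousOn h (V \ {q})) (he : ∀ z ∈ V \ {q}, exp (h z) = (z - p) / (z - q)) :
    False := by
  obtain ⟨ε, hε, hεV⟩ := Metric.mem_nhds_iff.1 hV
  have hd : 0 < ‖q - p‖ := norm_pos_iff.2 (sub_ne_zero.2 hqp)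
  obtain ⟨r, hr0, hr⟩ := exists_between (lt_min hε hd)
  have hr1 := lt_of_lt_of_le hr (min_le_left _ _)
  have hr2 := lt_of_lt_of_le hr (min_le_right _ _)
  let k : ℝ → ℂ := fun θ => q + r * exp (θ * I)
  have hkc : Continuous k := by fun_prop
  have hnk : ∀ θ : ℝ, ‖(r : ℂ) * exp (θ * I)‖ = r := by
    intro θ; rw [norm_mul, norm_exp_ofReal_mul_I, mul_one, norm_real, Real.norm_of_nonneg hr0.le]
  have hkV : ∀ θ, k θ ∈ V \ {q} := by
    intro θ
    refine ⟨hεV ?_, ?_⟩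
    · rw [Metric.mem_ball, dist_eq_norm]
      simp only [k, add_sub_cancel_left]
      rw [hnk]; exact hr1
    · intro hk
      have : (r : ℂ) * exp (θ * I) = 0 := by
        have := mem_singleton_iff.1 hk
        simpa [k] using this
      have h2 := hnk θ
      rw [this, norm_zero] at h2
      linarith
  have hqp' : q - p ≠ 0 := sub_ne_zero.2 hqp
  let η : ℂ := r / (q - p)
  have hη : ‖η‖ < 1 := by
    rw [norm_div, norm_real, Real.norm_of_nonneg hr0.le, div_lt_one hd]; exact hr2
  have hη2 : ∀ θ : ℝ, 1 + η * exp (θ * I) ∈ slitPlane := by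
    intro θ
    apply mem_slitPlane_of_norm_lt_one
    rw [norm_mul, norm_exp_ofReal_mul_I, mul_one]; exact hη
  let K : ℝ → ℂ := fun θ => h (k θ) - log (1 + η * exp (θ * I)) + θ * I
  have hK : Continuous K := by
    refine Continuous.add (Continuous.sub (hc.comp_continuous hkc hkV) ?_) (by fun_prop)
    exact Continuous.clog (by fun_prop) hη2
  have hr0' : (r : ℂ) ≠ 0 := by exact_mod_cast hr0.ne'
  have hexp : ∀ θ, exp (K θ) = (q - p) / r := by
    intro θ
    simp only [K]
    rw [exp_add, exp_sub, he _ (hkV θ), exp_log (slitPlane_ne_zero (hη2 θ))]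
    have h1 := slitPlane_ne_zero (hη2 θ)
    have h2 := exp_ne_zero (θ * I)
    have h3 : k θ - p = (q - p) * (1 + η * exp (θ * I)) := by
      simp only [k, η]; field_simp; ring
    have h4 : k θ - q = r * exp (θ * I) := by simp [k]
    rw [h3, h4]
    field_simp
  -- `K` is continuous with `exp ∘ K` constant, hence constant; but it grows by `2πi`
  have hconst : K (2 * Real.pi) = K 0 := by
    have := isCoveringMap_exp.eq_of_comp_eq (A := ℝ) (g₁ := K) (g₂ := fun _ => K 0) hK
      continuous_const (by
        funext θ
        apply Subtype.ext
        simp [hexp]) 0 rfl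
    exact congrFun this _
  have hp : exp (((2 * Real.pi : ℝ) : ℂ) * I) = 1 := by
    push_cast; exact exp_two_pi_mul_I
  simp only [K, k, hp] at hconst
  simp [Real.pi_ne_zero] at hconst

/-- A continuous `g` with `exp ∘ g = 1` takes values in `2πiℤ`, so its level sets are clopen. -/
theorem log_diff_open {O : Set ℂ} (hO : IsOpen O) (g : ℂ → ℂ) (hg : ContinuousOn g O)
    (he : ∀ z ∈ O, exp (g z) = 1) (c : ℂ) : IsOpen (O ∩ g ⁻¹' {c}) ∧ IsOpen (O ∩ g ⁻¹' {c}ᶜ) := by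
  refine ⟨?_, hg.isOpen_inter_preimage hO isOpen_compl_singleton⟩
  rcases (O ∩ g ⁻¹' {c}).eq_empty_or_nonempty with h | ⟨z0, hz0, hz0c⟩
  · rw [h]; exact isOpen_empty
  have : O ∩ g ⁻¹' {c} = O ∩ g ⁻¹' (Metric.ball c 1) := by
    ext z
    simp only [mem_inter_iff, mem_preimage, and_congr_right_iff, mem_singleton_iff]
    intro hz
    constructor
    · intro h; rw [h]; exact Metric.mem_ball_self one_pos
    · intro h
      obtain ⟨n, hn⟩ := exp_eq_one_iff.1 (he z hz)
      obtain ⟨m, hm⟩ := exp_eq_one_iff.1 (he z0 hz0)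
      rw [mem_singleton_iff.1 hz0c] at hm
      rw [Metric.mem_ball, dist_eq_norm, hn, hm, ← sub_mul, norm_mul] at h
      have h2 : ‖(2 * Real.pi * I : ℂ)‖ = 2 * Real.pi := by
        simp [abs_of_pos Real.pi_pos]
      rw [h2] at h
      have h3 : ‖((n : ℂ) - m)‖ = |((n - m : ℤ) : ℝ)| := by
        rw [← Int.cast_sub, norm_intCast]
      rw [h3] at h
      have h4 : n - m = 0 := by
        by_contra h5
        have h6 : (1 : ℝ) ≤ |((n - m : ℤ) : ℝ)| := by
          exact_mod_cast Int.one_le_abs h5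
        nlinarith [Real.pi_gt_three]
      rw [hn, hm, sub_eq_zero.1 h4]
  rw [this]
  exact hg.isOpen_inter_preimage hO Metric.isOpen_ball

/-- A weak form of the Jordan curve theorem. If two paths from `q` to `p` meet only at their end
points, then the complement of their union has a bounded clopen part `E`, contained in any given ball
containing the paths, which accumulates at `q`. Neither path is assumed injective.

Let `h₁`, `h₂` be logarithms of `(z - p) / (z - q)` off the two paths. Then `h₁ - h₂` is locally
constant, and `E` is the set where it differs from its value outside the ball. If `E` stayed away
from `q`, the two logarithms would glue to a logarithm on a punctured neighbourhood of `q`. -/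
theorem exists_inside {q p x : ℂ} {R : ℝ} (hqp : q ≠ p) (α β : Path q p)
    (hαβ : range α ∩ range β ⊆ {q, p}) (hγ : range α ∪ range β ⊆ Metric.ball x R) :
    ∃ E : Set ℂ, IsOpen E ∧ IsOpen ((range α ∪ range β)ᶜ \ E) ∧ E ⊆ Metric.ball x R ∧
      Disjoint E (range α ∪ range β) ∧ ∀ V ∈ 𝓝 q, (E ∩ V).Nonempty := by
  obtain ⟨h1, h1c, h1e⟩ := exists_log_path α
  obtain ⟨h2, h2c, h2e⟩ := exists_log_path β
  have hαcl : IsClosed (range α) := (isCompact_range α.continuous).isClosed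
  have hβcl : IsClosed (range β) := (isCompact_range β.continuous).isClosed
  have hO : IsOpen (range α ∪ range β)ᶜ := (hαcl.union hβcl).isOpen_compl
  have hO1 : (range α ∪ range β)ᶜ ⊆ (range α)ᶜ := compl_subset_compl.2 subset_union_left
  have hO2 : (range α ∪ range β)ᶜ ⊆ (range β)ᶜ := compl_subset_compl.2 subset_union_right
  let g : ℂ → ℂ := fun z => h1 z - h2 z
  have hg : ContinuousOn g (range α ∪ range β)ᶜ := (h1c.mono hO1).sub (h2c.mono hO2)
  have hge : ∀ z ∈ (range α ∪ range β)ᶜ, exp (g z) = 1 := by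
    intro z hz
    simp only [g]
    rw [exp_sub, h1e z (hO1 hz), h2e z (hO2 hz), ← h2e z (hO2 hz)]
    exact div_self (exp_ne_zero _)
  have hout : (Metric.ball x R)ᶜ ⊆ (range α ∪ range β)ᶜ := compl_subset_compl.2 hγ
  have hR : 0 < R := Metric.pos_of_mem_ball (hγ (Or.inl ⟨0, rfl⟩))
  let z0 : ℂ := x + R
  have hz0 : z0 ∈ (Metric.ball x R)ᶜ := by
    simp [z0, abs_of_pos hR]
  let c0 := g z0
  have hc0 : exp c0 = 1 := hge _ (hout hz0)
  obtain ⟨ho1, ho2⟩ := log_diff_open hO g hg hge c0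
  have hpre : IsPreconnected (Metric.ball x R)ᶜ := by
    have himg : (Metric.ball x R)ᶜ =
        (fun y : ℝ × ℝ => x + y.1 * exp (y.2 * I)) '' (Ici R ×ˢ univ) := by
      ext z
      simp only [mem_compl_iff, Metric.mem_ball, dist_eq_norm, not_lt, mem_image, mem_prod, mem_Ici,
        mem_univ, and_true, Prod.exists]
      constructor
      · intro hz
        refine ⟨‖z - x‖, arg (z - x), hz, ?_⟩
        rw [norm_mul_exp_arg_mul_I]; ring
      · rintro ⟨a, b, hab, rfl⟩
        rw [add_sub_cancel_left, norm_mul, norm_exp_ofReal_mul_I, mul_one, norm_real]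
        exact hab.trans (le_abs_self a)
    rw [himg]
    exact (isPreconnected_Ici.prod isPreconnected_univ).image _ (by fun_prop)
  refine ⟨(range α ∪ range β)ᶜ ∩ g ⁻¹' {c0}ᶜ, ho2, ?_, ?_, ?_, ?_⟩
  · convert ho1 using 1
    ext z
    simp only [Set.mem_sdiff, mem_inter_iff, mem_preimage, mem_compl_iff, mem_singleton_iff]
    tauto
  · intro z ⟨hz, hzc⟩
    by_contra hzb
    have := hpre _ _ ho1 ho2 (by
      intro y hy
      by_cases hyc : g y = c0
      · exact Or.inl ⟨hout hy, hyc⟩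
      · exact Or.inr ⟨hout hy, hyc⟩) ⟨z0, hz0, hout hz0, rfl⟩ ⟨z, hzb, hz, hzc⟩
    obtain ⟨y, -, hy1, hy2⟩ := this
    exact hy2.2 hy1.2
  · exact disjoint_compl_left.mono_left inter_subset_left
  · intro V hV
    by_contra hemp
    rw [not_nonempty_iff_eq_empty] at hemp
    have hgV : ∀ z ∈ V, z ∉ range α → z ∉ range β → h1 z = h2 z + c0 := by
      intro z hz hzα hzβ
      by_contra hne
      have : z ∈ (∅ : Set ℂ) := by
        rw [← hemp]
        refine ⟨⟨?_, ?_⟩, hz⟩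
        · rintro (h | h); exacts [hzα h, hzβ h]
        · intro h
          apply hne
          have h' : g z = c0 := h
          rw [← h']; simp only [g]; ring
      exact this
    have hV' : interior V ∩ {p}ᶜ ∈ 𝓝 q := inter_mem (interior_mem_nhds.2 hV)
      (isOpen_compl_singleton.mem_nhds hqp)
    have hV'o : IsOpen (interior V ∩ {p}ᶜ) := isOpen_interior.inter isOpen_compl_singleton
    classical
    -- the logarithms off `α` and off `β` agree near `q` up to the constant `c0`, and glue
    let h : ℂ → ℂ := fun z => if z ∈ range α then h2 z + c0 else h1 z
    have hβ : ∀ z ∈ (interior V ∩ {p}ᶜ) \ {q}, z ∈ range α → z ∉ range β := by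
      rintro z ⟨⟨_, hzp⟩, hzq⟩ hzα hzβ
      rcases hαβ ⟨hzα, hzβ⟩ with h | h
      exacts [hzq h, hzp h]
    refine no_log_pole hqp hV' h ?_ ?_
    · intro z hz
      apply ContinuousAt.continuousWithinAt
      by_cases hzα : z ∈ range α
      · have hzβ := hβ z hz hzα
        have hcont : ContinuousAt (fun z => h2 z + c0) z :=
          (h2c.continuousAt (hβcl.isOpen_compl.mem_nhds hzβ)).add continuousAt_const
        refine hcont.congr ?_
        filter_upwards [hβcl.isOpen_compl.mem_nhds hzβ, hV'o.mem_nhds hz.1] with y hy hyV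
        by_cases hyα : y ∈ range α
        · simp only [h, if_pos hyα]
        · simp only [h, if_neg hyα]
          exact (hgV y (interior_subset hyV.1) hyα hy).symm
      · refine (h1c.continuousAt (hαcl.isOpen_compl.mem_nhds hzα)).congr ?_
        filter_upwards [hαcl.isOpen_compl.mem_nhds hzα] with y hy
        exact (if_neg hy).symm
    · intro z hz
      by_cases hzα : z ∈ range α
      · simp only [h, if_pos hzα]
        rw [exp_add, hc0, mul_one, h2e z (hβ z hz hzα)]
      · simp only [h, if_neg hzα]
        exact h1e z hzα

/-! ### Proper open maps and slit domains -/

/-- `f` restricts to a continuous, open and proper map from the open set `U` to `D`. Properness is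
stated as compactness of the preimage in `U` of each compact subset of `D`. -/
structure IsProperOpen (f : ℂ → ℂ) (U D : Set ℂ) : Prop where
  isOpen_source : IsOpen U
  continuousOn : ContinuousOn f U
  mapsTo : MapsTo f U D
  isOpen_image : ∀ O ⊆ U, IsOpen O → IsOpen (f '' O)
  isCompact_preimage : ∀ K ⊆ D, IsCompact K → IsCompact (U ∩ f ⁻¹' K)

/-- If `D` misses the image of the sphere bounding a ball, the part of the ball over `D` is mapped
properly to `D`. -/
theorem IsProperOpen.of_closedBall {f : ℂ → ℂ} {Ω : Set ℂ} (hcont : ContinuousOn f Ω)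
    (hopen : ∀ U : Set ℂ, U ⊆ Ω → IsOpen U → IsOpen (f '' U)) {x : ℂ} {R : ℝ} {D : Set ℂ}
    (hR : Metric.closedBall x R ⊆ Ω) (hD : IsOpen D)
    (hs : Disjoint D (f '' Metric.sphere x R)) :
    IsProperOpen f (Metric.ball x R ∩ f ⁻¹' D) D := by
  have hc : ContinuousOn f (Metric.closedBall x R) := hcont.mono hR
  have hbΩ : Metric.ball x R ⊆ Ω := Metric.ball_subset_closedBall.trans hR
  refine ⟨(hcont.mono hbΩ).isOpen_inter_preimage Metric.isOpen_ball hD,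
    hcont.mono (inter_subset_left.trans hbΩ), fun z hz => hz.2,
    fun O hO => hopen O (hO.trans (inter_subset_left.trans hbΩ)), ?_⟩
  intro K hK hKc
  have : Metric.ball x R ∩ f ⁻¹' D ∩ f ⁻¹' K = Metric.closedBall x R ∩ f ⁻¹' K := by
    ext z
    constructor
    · rintro ⟨⟨h1, h2⟩, h3⟩
      exact ⟨Metric.ball_subset_closedBall h1, h3⟩
    · rintro ⟨h1, h2⟩
      refine ⟨⟨?_, hK h2⟩, h2⟩
      rcases (Metric.mem_closedBall.1 h1).lt_or_eq with h | h
      · exact h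
      · exact (disjoint_left.1 hs (hK h2) ⟨z, h, rfl⟩).elim
  rw [this]
  exact (isCompact_closedBall x R).of_isClosed_subset
    (hc.preimage_isClosed_of_isClosed Metric.isClosed_closedBall hKc.isClosed) inter_subset_left

/-- A nonempty relatively clopen part `O` of the preimage of a connected open set `G` is mapped onto
`G`: its image is open, and closed in `G` by properness. -/
theorem IsProperOpen.image_clopen {f : ℂ → ℂ} {U D G O : Set ℂ} (h : IsProperOpen f U D)
    (hG : IsOpen G) (hGD : G ⊆ D) (hGc : IsPreconnected G) (hOs : O ⊆ U ∩ f ⁻¹' G)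
    (hO : IsOpen O) (hO' : IsOpen ((U ∩ f ⁻¹' G) \ O)) (hne : O.Nonempty) : G ⊆ f '' O := by
  have hopen : IsOpen (f '' O) := h.isOpen_image O (hOs.trans inter_subset_left) hO
  refine hGc.subset_of_closure_inter_subset hopen ?_ ?_
  · obtain ⟨z, hz⟩ := hne
    exact ⟨f z, (hOs hz).2, z, hz, rfl⟩
  · rintro y ⟨hy, hyG⟩
    obtain ⟨K, hKc, hyK, hKG⟩ := exists_compact_subset hG hyG
    have h1 := h.isCompact_preimage K (hKG.trans hGD) hKc
    have h2 : IsCompact ((U ∩ f ⁻¹' K) \ ((U ∩ f ⁻¹' G) \ O)) := IsCompact.diff h1 hO'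
    have h3 : IsCompact (f '' ((U ∩ f ⁻¹' K) \ ((U ∩ f ⁻¹' G) \ O))) :=
      h2.image_of_continuousOn (h.continuousOn.mono (sdiff_subset.trans inter_subset_left))
    have h4 : f '' ((U ∩ f ⁻¹' K) \ ((U ∩ f ⁻¹' G) \ O)) ⊆ f '' O := by
      rintro _ ⟨z, ⟨⟨hzU, hzK⟩, hz⟩, rfl⟩
      refine ⟨z, ?_, rfl⟩
      by_contra hzO
      exact hz ⟨⟨hzU, hKG hzK⟩, hzO⟩
    apply h4
    rw [← h3.isClosed.closure_eq]
    rw [mem_closure_iff_nhds] at hy ⊢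
    intro t ht
    obtain ⟨_, ⟨h5, h5'⟩, z, hz, rfl⟩ := hy (t ∩ interior K) (inter_mem ht (isOpen_interior.mem_nhds hyK))
    exact ⟨f z, h5, z, ⟨⟨(hOs hz).1, (interior_subset h5' : f z ∈ K)⟩, fun h6 => h6.2 hz⟩, rfl⟩

/-- The closed ray from `v` in the direction `u`. -/
def ray (v u : ℂ) : Set ℂ := (fun τ : ℝ => v + τ * u) '' Ici 0

theorem isClosed_ray (v : ℂ) {u : ℂ} (hu : u ≠ 0) : IsClosed (ray v u) := by
  have : IsClosedEmbedding (fun τ : ℝ => v + τ * u) := by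
    have h1 : IsClosedEmbedding (fun τ : ℝ => τ • u) := isClosedEmbedding_smul_left hu
    have := (Homeomorph.addLeft v).isClosedEmbedding.comp h1
    simpa [Function.comp_def] using this
  exact this.isClosedMap _ isClosed_Ici

/-- A convex open set slit along a ray from one of its points `v` is star-shaped about a point just
behind `v`, hence connected. -/
theorem slit_isPreconnected {D : Set ℂ} (hD : IsOpen D) (hDc : Convex ℝ D) {v u : ℂ} (hv : v ∈ D)
    (hu : u ≠ 0) : IsPreconnected (D \ ray v u) := by
  obtain ⟨ε, hε, hεD⟩ : ∃ ε > 0, v - (ε : ℝ) * u ∈ D := by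
    have hc : ContinuousAt (fun ε : ℝ => v - ε * u) 0 := by fun_prop
    have h1 : ∀ᶠ ε : ℝ in 𝓝 0, v - ε * u ∈ D := hc.eventually_mem (by
      simpa using hD.mem_nhds hv)
    obtain ⟨ε, h2, h3⟩ := ((h1.filter_mono nhdsWithin_le_nhds).and
      (self_mem_nhdsWithin : Ioi (0:ℝ) ∈ 𝓝[>] 0)).exists
    exact ⟨ε, h3, h2⟩
  have hst : StarConvex ℝ (v - ε * u) (D \ ray v u) := by
    intro z hz a b ha hb hab
    refine ⟨hDc hεD hz.1 ha hb hab, ?_⟩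
    rintro ⟨τ, hτ, h⟩
    rw [mem_Ici] at hτ
    simp only [real_smul] at h
    have hab' : (a : ℂ) = 1 - b := by rw [← ofReal_one, ← hab]; push_cast; ring
    have hb0 : b ≠ 0 := by
      rintro rfl
      rw [hab'] at h
      simp only [ofReal_zero, sub_zero, one_mul, zero_mul, add_zero] at h
      have h2 : ((τ + ε : ℝ) : ℂ) * u = 0 := by push_cast; linear_combination h
      rcases mul_eq_zero.1 h2 with h3 | h3
      · have : τ + ε = 0 := by exact_mod_cast h3
        linarith
      · exact hu h3
    apply hz.2
    refine ⟨(τ + a * ε) / b, ?_, ?_⟩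
    · rw [mem_Ici]; positivity
    · have hb0' : (b : ℂ) ≠ 0 := by exact_mod_cast hb0
      push_cast
      field_simp
      rw [hab'] at h ⊢
      linear_combination h
  rcases (D \ ray v u).eq_empty_or_nonempty with h | h
  · rw [h]; exact isPreconnected_empty
  · exact (hst.isPathConnected (hst.mem h)).isConnected.isPreconnected

/-- There is a direction `u` whose closed ray from `0` avoids the open rays through `a` and `b`. At
most one of the three directions `1`, `I`, `-1` is excluded by each of `a` and `b`. -/
theorem exists_direction {a b : ℂ} (ha : a ≠ 0) (hb : b ≠ 0) : ∃ u : ℂ, u ≠ 0 ∧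
    (∀ τ s : ℝ, 0 ≤ τ → 0 < s → τ * u ≠ s * a) ∧ (∀ τ s : ℝ, 0 ≤ τ → 0 < s → τ * u ≠ s * b) := by
  have key : ∀ c : ℂ, c ≠ 0 →
      ((∀ τ s : ℝ, 0 ≤ τ → 0 < s → (τ : ℂ) * 1 ≠ s * c) ∧
        (∀ τ s : ℝ, 0 ≤ τ → 0 < s → (τ : ℂ) * I ≠ s * c)) ∨
      ((∀ τ s : ℝ, 0 ≤ τ → 0 < s → (τ : ℂ) * 1 ≠ s * c) ∧
        (∀ τ s : ℝ, 0 ≤ τ → 0 < s → (τ : ℂ) * (-1) ≠ s * c)) ∨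
      ((∀ τ s : ℝ, 0 ≤ τ → 0 < s → (τ : ℂ) * I ≠ s * c) ∧
        (∀ τ s : ℝ, 0 ≤ τ → 0 < s → (τ : ℂ) * (-1) ≠ s * c)) := by
    intro c hc
    have hc' : c.re ≠ 0 ∨ c.im ≠ 0 := by
      by_contra! h
      exact hc (Complex.ext h.1 h.2)
    have h1 : ∀ τ s : ℝ, (τ : ℂ) * 1 = s * c → τ = s * c.re ∧ 0 = s * c.im := by
      intro τ s h; simpa using And.intro (congrArg re h) (congrArg im h)
    have h2 : ∀ τ s : ℝ, (τ : ℂ) * I = s * c → 0 = s * c.re ∧ τ = s * c.im := by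
      intro τ s h; simpa using And.intro (congrArg re h) (congrArg im h)
    have h3 : ∀ τ s : ℝ, (τ : ℂ) * (-1) = s * c → -τ = s * c.re ∧ 0 = s * c.im := by
      intro τ s h; simpa using And.intro (congrArg re h) (congrArg im h)
    by_cases him : c.im = 0
    · have hre : c.re ≠ 0 := hc'.resolve_right (by simpa using him)
      rcases hre.lt_or_gt with h | h
      · left
        refine ⟨fun τ s hτ hs e => ?_, fun τ s hτ hs e => ?_⟩
        · nlinarith [(h1 τ s e).1, mul_neg_of_pos_of_neg hs h]
        · nlinarith [(h2 τ s e).1, mul_neg_of_pos_of_neg hs h]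
      · right; right
        refine ⟨fun τ s hτ hs e => ?_, fun τ s hτ hs e => ?_⟩
        · nlinarith [(h2 τ s e).1, mul_pos hs h]
        · nlinarith [(h3 τ s e).1, mul_pos hs h]
    · right; left
      refine ⟨fun τ s hτ hs e => ?_, fun τ s hτ hs e => ?_⟩
      · rcases mul_eq_zero.1 (h1 τ s e).2.symm with h | h
        exacts [hs.ne' h, him h]
      · rcases mul_eq_zero.1 (h3 τ s e).2.symm with h | h
        exacts [hs.ne' h, him h]
  rcases key a ha with ⟨p, q⟩ | ⟨p, q⟩ | ⟨p, q⟩ <;> rcases key b hb with ⟨r, s⟩ | ⟨r, s⟩ | ⟨r, s⟩ <;>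
  first
  | exact ⟨1, one_ne_zero, by assumption, by assumption⟩
  | exact ⟨I, I_ne_zero, by assumption, by assumption⟩
  | exact ⟨-1, neg_ne_zero.2 one_ne_zero, by assumption, by assumption⟩

theorem exists_path_of_continuousOn {g : ℝ → ℂ} {a b : ℝ} (hab : a ≤ b)
    (hg : ContinuousOn g (Icc a b)) : ∃ P : Path (g a) (g b), range P = g '' Icc a b := by
  let k : unitInterval → ℝ := fun t => a + t * (b - a)
  have hk : ∀ t, k t ∈ Icc a b := by
    intro t
    have h0 := t.2.1
    have h1 := t.2.2
    simp only [k, mem_Icc]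
    constructor <;> nlinarith
  refine ⟨⟨⟨fun t => g (k t), hg.comp_continuous (by fun_prop) hk⟩, by simp [k], by simp [k]⟩, ?_⟩
  ext z
  constructor
  · rintro ⟨t, rfl⟩
    exact ⟨k t, hk t, rfl⟩
  · rintro ⟨y, hy, rfl⟩
    rcases hab.eq_or_lt with rfl | h
    · refine ⟨0, ?_⟩
      have : y = a := le_antisymm hy.2 hy.1
      simp [k, this]
    · have h' : 0 < b - a := sub_pos.2 h
      refine ⟨⟨(y - a) / (b - a), div_nonneg (by linarith [hy.1]) h'.le, ?_⟩, ?_⟩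
      · rw [div_le_one h']; linarith [hy.2]
      · simp only [k, Path.coe_mk', ContinuousMap.coe_mk]
        congr 1
        field_simp
        ring

/-! ### Arcs over a common segment -/

/-- `f` is continuous, open and discrete on the open set `Ω`. The total function `f : ℂ → ℂ` is only
constrained on `Ω`. -/
structure IsOpenDiscrete (f : ℂ → ℂ) (Ω : Set ℂ) : Prop where
  isOpen_domain : IsOpen Ω
  continuousOn : ContinuousOn f Ω
  isOpen_image : ∀ U : Set ℂ, U ⊆ Ω → IsOpen U → IsOpen (f '' U)
  discrete : ∀ y : ℂ, ∀ x ∈ Ω ∩ f ⁻¹' {y},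
      ∃ V : Set ℂ, IsOpen V ∧ x ∈ V ∧ V ∩ (Ω ∩ f ⁻¹' {y}) = {x}

/-- Small normal neighbourhoods: `q` is the only point of its fibre in a small closed ball, and some
disc around `f q` misses the image of the bounding sphere. -/
theorem IsOpenDiscrete.exists_normal {f : ℂ → ℂ} {Ω : Set ℂ} (h : IsOpenDiscrete f Ω) {q : ℂ}
    (hq : q ∈ Ω) {N : Set ℂ} (hN : N ∈ 𝓝 q) :
    ∃ ρ > 0, ∃ δ > 0, Metric.closedBall q ρ ⊆ N ∩ Ω ∧
      (∀ z ∈ Metric.closedBall q ρ, f z = f q → z = q) ∧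
      Disjoint (Metric.ball (f q) δ) (f '' Metric.sphere q ρ) := by
  obtain ⟨V, hVo, hqV, hV⟩ := h.discrete (f q) q ⟨hq, rfl⟩
  have hnh : (N ∩ Ω) ∩ V ∈ 𝓝 q :=
    inter_mem (inter_mem hN (h.isOpen_domain.mem_nhds hq)) (hVo.mem_nhds hqV)
  obtain ⟨ρ, hρ, hρV⟩ := Metric.nhds_basis_closedBall.mem_iff.1 hnh
  have huniq : ∀ z ∈ Metric.closedBall q ρ, f z = f q → z = q := by
    intro z hz hfz
    have : z ∈ V ∩ (Ω ∩ f ⁻¹' {f q}) := ⟨(hρV hz).2, (hρV hz).1.2, hfz⟩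
    rw [hV] at this
    exact this
  have hsc : IsClosed (f '' Metric.sphere q ρ) :=
    ((isCompact_sphere q ρ).image_of_continuousOn (h.continuousOn.mono
      (Metric.sphere_subset_closedBall.trans fun z hz => (hρV hz).1.2))).isClosed
  have hqs : f q ∈ (f '' Metric.sphere q ρ)ᶜ := by
    rintro ⟨z, hz, hfz⟩
    have := huniq z (Metric.sphere_subset_closedBall hz) hfz
    rw [this, Metric.mem_sphere, dist_self] at hz
    exact hρ.ne hz
  obtain ⟨δ, hδ, hδs⟩ := Metric.isOpen_iff.1 hsc.isOpen_compl _ hqs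
  exact ⟨ρ, hρ, δ, hδ, fun z hz => (hρV hz).1, huniq, disjoint_left.2 fun y hy hy' => hδs hy hy'⟩

theorem ray_not_open {v w : ℂ} (hw : w ≠ 0) {O : Set ℂ} (hO : IsOpen O) (hne : O.Nonempty) :
    ∃ y ∈ O, y ∉ ray v w := by
  by_contra! hcon
  obtain ⟨y, hy⟩ := hne
  obtain ⟨t, -, hty⟩ := hcon y hy
  have hc : ContinuousAt (fun ε : ℝ => y + ε * (I * w)) 0 := by fun_prop
  have h1 : ∀ᶠ ε : ℝ in 𝓝 0, y + ε * (I * w) ∈ O := hc.eventually_mem (by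
    simpa using hO.mem_nhds hy)
  obtain ⟨ε, h2, h3⟩ := ((h1.filter_mono nhdsWithin_le_nhds).and
      (self_mem_nhdsWithin : Ioi (0:ℝ) ∈ 𝓝[>] 0)).exists
  obtain ⟨s, -, hs⟩ := hcon _ h2
  simp only at hs hty
  rw [← hty] at hs
  have h4 : (s : ℂ) = t + ε * I := by
    apply mul_right_cancel₀ hw
    linear_combination hs
  have := congrArg im h4
  simp at this
  exact h3.ne this

/-- Two arcs over the same segment starting at a common point `q` cannot be disjoint afterwards, if
`q` lies in a normal neighbourhood `U` of `x₀` and `f q ≠ f x₀`.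

Write `v = f q` and let `w` be the direction of the segment. Choose a ray `L` from `v` avoiding both
the segment (apart from `v`) and `f x₀`. Every clopen part of the preimage of `D \ L` in `U` maps onto
`D \ L`, hence contains `x₀`, the only point over `f x₀`; so this preimage is connected, and the end
points of the two arcs are joined in it by a path `c`. The arcs and `c` form a closed curve whose
image meets `L` only in `v`. Let `E` be the inside given by `exists_inside`. As the image of `E` is open,
bounded, and closed relative to `L \ {v}`, it misses `L \ {v}`. But near `q` the curve lies over the
segment, so `E` contains a clopen part of the preimage of a small disc slit along the segment, and
the image of this part is the whole slit disc, which meets `L`. -/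
theorem IsOpenDiscrete.no_double_arc {f : ℂ → ℂ} {Ω U D : Set ℂ} (hf : IsOpenDiscrete f Ω)
    (h : IsProperOpen f U D) (hD : IsOpen D) (hDc : Convex ℝ D) {x₀ : ℂ} {R : ℝ}
    (hRΩ : Metric.ball x₀ R ⊆ Ω) (hUR : U ⊆ Metric.ball x₀ R) (hx₀D : f x₀ ∈ D)
    (hx₀ : ∀ x ∈ U, f x = f x₀ → x = x₀) {w : ℂ} (hw : w ≠ 0) {s₁ s₂ : ℝ → ℂ}
    (hs₁ : ContinuousOn s₁ (Icc 0 1)) (hs₂ : ContinuousOn s₂ (Icc 0 1))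
    (hs₁U : MapsTo s₁ (Icc 0 1) U) (hs₂U : MapsTo s₂ (Icc 0 1) U) (h0 : s₂ 0 = s₁ 0)
    (hv : f (s₁ 0) ≠ f x₀)
    (hfs₁ : ∀ t ∈ Icc (0 : ℝ) 1, f (s₁ t) = f (s₁ 0) + t * w)
    (hfs₂ : ∀ t ∈ Icc (0 : ℝ) 1, f (s₂ t) = f (s₁ 0) + t * w)
    (hne : ∀ t ∈ Ioc (0 : ℝ) 1, s₁ t ≠ s₂ t) : False := by
  set q := s₁ 0 with hq
  set v := f q with hv_def
  have m0 : (0 : ℝ) ∈ Icc (0 : ℝ) 1 := by simp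
  have m1 : (1 : ℝ) ∈ Icc (0 : ℝ) 1 := by simp
  have hqU : q ∈ U := hs₁U m0
  have hvD : v ∈ D := h.mapsTo hqU
  have hUΩ : U ⊆ Ω := hUR.trans hRΩ
  obtain ⟨u, hu, huw, huy⟩ := exists_direction hw (sub_ne_zero.2 hv.symm)
  -- the slit domain `D \ ray v u` contains `f x₀` and is connected
  have hG : IsOpen (D \ ray v u) := hD.sdiff (isClosed_ray v hu)
  have hGc := slit_isPreconnected hD hDc hvD hu
  have hyG : f x₀ ∈ D \ ray v u := by
    refine ⟨hx₀D, ?_⟩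
    rintro ⟨τ, hτ, e⟩
    refine huy τ 1 hτ one_pos ?_
    simp only at e
    rw [← e]; push_cast; ring
  have hWo : IsOpen (U ∩ f ⁻¹' (D \ ray v u)) := h.continuousOn.isOpen_inter_preimage h.isOpen_source hG
  have hmem : ∀ t ∈ Ioc (0 : ℝ) 1, ∀ z ∈ U, f z = v + t * w → z ∈ U ∩ f ⁻¹' (D \ ray v u) := by
    intro t ht z hz hfz
    refine ⟨hz, h.mapsTo hz, ?_⟩
    rintro ⟨τ, hτ, e⟩
    refine huw τ t hτ ht.1 ?_
    simp only at e
    rw [hfz] at e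
    linear_combination e
  have hm11 : s₁ 1 ∈ U ∩ f ⁻¹' (D \ ray v u) :=
    hmem 1 (by simp) _ (hs₁U m1) (hfs₁ 1 m1)
  have hm21 : s₂ 1 ∈ U ∩ f ⁻¹' (D \ ray v u) :=
    hmem 1 (by simp) _ (hs₂U m1) (hfs₂ 1 m1)
  have hWpre : IsPreconnected (U ∩ f ⁻¹' (D \ ray v u)) := by
    rw [isPreconnected_iff_subset_of_disjoint]
    intro A B hA hB hAB hdisj
    -- a nonempty clopen part of the preimage of the slit domain contains `x₀`
    have key : ∀ A B : Set ℂ, IsOpen A → IsOpen B → U ∩ f ⁻¹' (D \ ray v u) ⊆ A ∪ B →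
        U ∩ f ⁻¹' (D \ ray v u) ∩ (A ∩ B) = ∅ → (U ∩ f ⁻¹' (D \ ray v u) ∩ A).Nonempty →
        x₀ ∈ A ∧ x₀ ∈ U ∩ f ⁻¹' (D \ ray v u) := by
      intro A B hA hB hAB hdisj hAne
      have e : (U ∩ f ⁻¹' (D \ ray v u)) \ (U ∩ f ⁻¹' (D \ ray v u) ∩ A) =
          U ∩ f ⁻¹' (D \ ray v u) ∩ B := by
        ext z
        constructor
        · rintro ⟨hz, hz'⟩
          exact ⟨hz, (hAB hz).resolve_left fun hzA => hz' ⟨hz, hzA⟩⟩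
        · rintro ⟨hz, hzB⟩
          refine ⟨hz, fun hz' => ?_⟩
          have : z ∈ (∅ : Set ℂ) := hdisj ▸ ⟨hz, hz'.2, hzB⟩
          exact this
      obtain ⟨z, ⟨hz, hzA⟩, hfz⟩ := h.image_clopen hG sdiff_subset hGc inter_subset_left
        (hWo.inter hA) (e ▸ hWo.inter hB) hAne hyG
      have := hx₀ z hz.1 hfz
      rw [this] at hz hzA
      exact ⟨hzA, hz⟩
    by_contra! hcon
    obtain ⟨h1, h2⟩ := hcon
    obtain ⟨z1, hz1, hz1A⟩ := not_subset.1 h1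
    obtain ⟨z2, hz2, hz2B⟩ := not_subset.1 h2
    have k1 := key A B hA hB hAB hdisj ⟨z2, hz2, (hAB hz2).resolve_right hz2B⟩
    have k2 := key B A hB hA (by rwa [union_comm]) (by rwa [inter_comm B A])
      ⟨z1, hz1, (hAB hz1).resolve_left hz1A⟩
    have : x₀ ∈ (∅ : Set ℂ) := hdisj ▸ ⟨k1.2, k1.1, k2.1⟩
    exact this
  have hWpath : IsPathConnected (U ∩ f ⁻¹' (D \ ray v u)) :=
    hWo.isConnected_iff_isPathConnected.1 ⟨⟨_, hm11⟩, hWpre⟩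
  obtain ⟨c, hc⟩ := hWpath.joinedIn _ hm11 _ hm21
  have hcW : range c ⊆ U ∩ f ⁻¹' (D \ ray v u) := by
    rintro _ ⟨t, rfl⟩; exact hc t
  have hccl : IsClosed (range c) := (isCompact_range c.continuous).isClosed
  have hvray : v ∈ ray v u := ⟨0, by simp, by simp⟩
  have hqc : q ∉ range c := fun hqc => (hcW hqc).2.2 hvray
  obtain ⟨t₂, ht₂0, ht₂1, ht₂⟩ : ∃ t₂ : ℝ, 0 < t₂ ∧ t₂ < 1 ∧ ∀ t ∈ Icc 0 t₂, s₁ t ∉ range c := by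
    have h1 : ∀ᶠ t in 𝓝[Icc 0 1] (0 : ℝ), s₁ t ∈ (range c)ᶜ :=
      (hs₁ 0 m0).eventually_mem (hccl.isOpen_compl.mem_nhds hqc)
    obtain ⟨ε, hε, h2⟩ := Metric.mem_nhdsWithin_iff.1 h1
    refine ⟨min (ε / 2) (1 / 2), by positivity, ?_, ?_⟩
    · exact lt_of_le_of_lt (min_le_right _ _) (by norm_num)
    · intro t ht
      have h3 := ht.2.trans (min_le_left _ _)
      have h4 := ht.2.trans (min_le_right _ _)
      refine h2 ⟨?_, ht.1, h4.trans (by norm_num)⟩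
      rw [Metric.mem_ball, dist_zero_right, Real.norm_of_nonneg ht.1]
      linarith
  have hsub1 : Icc 0 t₂ ⊆ Icc (0 : ℝ) 1 := Icc_subset_Icc_right ht₂1.le
  have hsub2 : Icc t₂ 1 ⊆ Icc (0 : ℝ) 1 := Icc_subset_Icc_left ht₂0.le
  have hwinj : ∀ t t' : ℝ, v + t * w = v + t' * w → t = t' := by
    intro t t' e
    have : (t : ℂ) = t' := mul_right_cancel₀ hw (add_left_cancel e)
    exact_mod_cast this
  -- closed curve: `α` is the beginning of `s₁`; `β` follows `s₂`, then `c` backwards, then the rest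
  -- of `s₁` backwards; `c` may cross the arcs away from `α`, which affects only `β`
  obtain ⟨α, hα⟩ := exists_path_of_continuousOn ht₂0.le (hs₁.mono hsub1)
  obtain ⟨P₂, hP₂⟩ := exists_path_of_continuousOn zero_le_one hs₂
  obtain ⟨P₃, hP₃⟩ := exists_path_of_continuousOn ht₂1.le (hs₁.mono hsub2)
  let β : Path q (s₁ t₂) := ((P₂.cast h0.symm rfl).trans c.symm).trans P₃.symm
  have hβ : range β = s₂ '' Icc 0 1 ∪ range c ∪ s₁ '' Icc t₂ 1 := by
    simp only [β, Path.trans_range, Path.symm_range, hP₃]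
    rw [← hP₂]; rfl
  have mt₂ : t₂ ∈ Icc (0 : ℝ) 1 := ⟨ht₂0.le, ht₂1.le⟩
  have hqp : q ≠ s₁ t₂ := by
    intro e
    have := hwinj 0 t₂ (by rw [← hfs₁ t₂ mt₂, ← e]; simp [hv_def])
    exact ht₂0.ne this
  have hαβ : range α ∩ range β ⊆ {q, s₁ t₂} := by
    rw [hα, hβ]
    rintro _ ⟨⟨t, ht, rfl⟩, (⟨t', ht', e⟩ | hz) | ⟨t', ht', e⟩⟩
    · have h1 := hwinj t' t (by rw [← hfs₂ t' ht', ← hfs₁ t (hsub1 ht), e])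
      subst h1
      rcases ht'.1.eq_or_lt with h2 | h2
      · left; rw [← h2]
      · exact (hne t' ⟨h2, ht'.2⟩ e.symm).elim
    · exact (ht₂ t ht hz).elim
    · have h1 := hwinj t' t (by rw [← hfs₁ t' (hsub2 ht'), ← hfs₁ t (hsub1 ht), e])
      subst h1
      right
      rw [le_antisymm ht.2 ht'.1]; rfl
  have hγU : range α ∪ range β ⊆ U := by
    rw [hα, hβ]
    refine union_subset ?_ (union_subset (union_subset ?_ ?_) ?_)
    · exact (hs₁U.mono_left hsub1).image_subset
    · exact hs₂U.image_subset
    · exact hcW.trans inter_subset_left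
    · exact (hs₁U.mono_left hsub2).image_subset
  obtain ⟨E, hEo, hEo', hER, hEγ, hEq⟩ := exists_inside hqp α β hαβ (hγU.trans hUR)
  have hγcl : IsCompact (range α ∪ range β) :=
    (isCompact_range α.continuous).union (isCompact_range β.continuous)
  -- the open ray misses the image of the closed curve, and then the image of `E`
  have hrayγ : ∀ τ : ℝ, 0 < τ → v + τ * u ∉ f '' (range α ∪ range β) := by
    have hs : ∀ s : ℝ → ℂ, (∀ t ∈ Icc (0 : ℝ) 1, f (s t) = v + t * w) → ∀ t ∈ Icc (0 : ℝ) 1,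
        ∀ τ : ℝ, 0 < τ → f (s t) ≠ v + τ * u := by
      intro s hs t ht τ hτ e
      rw [hs t ht] at e
      have e' := add_left_cancel e
      rcases ht.1.eq_or_lt with h2 | h2
      · rw [← h2] at e'
        simp only [ofReal_zero, zero_mul] at e'
        rcases mul_eq_zero.1 e'.symm with h3 | h3
        · exact hτ.ne' (by exact_mod_cast h3)
        · exact hu h3
      · exact huw τ t hτ.le h2 e'.symm
    rintro τ hτ ⟨z, hz, e⟩
    rw [hα, hβ] at hz
    rcases hz with ⟨t, ht, rfl⟩ | (⟨t, ht, rfl⟩ | hz) | ⟨t, ht, rfl⟩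
    · exact hs s₁ hfs₁ t (hsub1 ht) τ hτ e
    · exact hs s₂ hfs₂ t ht τ hτ e
    · exact (hcW hz).2.2 ⟨τ, hτ.le, e.symm⟩
    · exact hs s₁ hfs₁ t (hsub2 ht) τ hτ e
  have hKsub : E ∪ (range α ∪ range β) ⊆ Metric.ball x₀ R := union_subset hER (hγU.trans hUR)
  have hKc : IsCompact (E ∪ (range α ∪ range β)) := by
    refine (isCompact_closedBall x₀ R).of_isClosed_subset ?_
      (hKsub.trans Metric.ball_subset_closedBall)
    rw [← isOpen_compl_iff, compl_union]
    rwa [sdiff_eq, inter_comm] at hEo'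
  have hfK : IsCompact (f '' (E ∪ (range α ∪ range β))) :=
    hKc.image_of_continuousOn (hf.continuousOn.mono (hKsub.trans hRΩ))
  have hray : ∀ τ : ℝ, 0 < τ → v + τ * u ∉ f '' E := by
    intro τ hτ hτE
    have hk : Continuous fun τ : ℝ => v + τ * u := by fun_prop
    have hall : Ioi (0 : ℝ) ⊆ (fun τ : ℝ => v + τ * u) ⁻¹' (f '' E) := by
      refine isPreconnected_Ioi.subset_of_closure_inter_subset
        ((hf.isOpen_image E (hER.trans hRΩ) hEo).preimage hk) ⟨τ, hτ, hτE⟩ ?_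
      rintro σ ⟨hσ, hσ0⟩
      have h1 : σ ∈ (fun τ : ℝ => v + τ * u) ⁻¹' (f '' (E ∪ (range α ∪ range β))) := by
        refine closure_minimal (preimage_mono (image_mono subset_union_left))
          (hfK.isClosed.preimage hk) hσ
      rw [mem_preimage, image_union] at h1
      exact h1.resolve_right (hrayγ σ hσ0)
    obtain ⟨C, hC⟩ := hfK.isBounded.exists_norm_le
    have hupos : 0 < ‖u‖ := norm_pos_iff.2 hu
    have hC' := hC _ (image_mono subset_union_left
      (hall (show (0 : ℝ) < (‖v‖ + |C| + 1) / ‖u‖ by positivity)))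
    have h5 : ‖(((‖v‖ + |C| + 1) / ‖u‖ : ℝ) : ℂ) * u‖ = ‖v‖ + |C| + 1 := by
      rw [norm_mul, norm_real, Real.norm_of_nonneg (by positivity)]
      field_simp
    have h6 := norm_sub_norm_le ((((‖v‖ + |C| + 1) / ‖u‖ : ℝ) : ℂ) * u) (-v)
    rw [norm_neg, sub_neg_eq_add, h5, add_comm _ v] at h6
    linarith [le_abs_self C]
  -- near `q` the closed curve is contained in the two arcs
  have hNc : IsClosed (range c ∪ s₁ '' Icc t₂ 1) :=
    hccl.union ((isCompact_Icc.image_of_continuousOn (hs₁.mono hsub2)).isClosed)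
  have hqN : q ∈ (range c ∪ s₁ '' Icc t₂ 1)ᶜ := by
    rintro (h1 | ⟨t, ht, e⟩)
    · exact hqc h1
    · have := hwinj t 0 (by rw [← hfs₁ t (hsub2 ht), e]; simp [hv_def])
      linarith [ht.1]
  obtain ⟨ρ, hρ, δ, hδ, hρΩ, -, hdis⟩ := hf.exists_normal (hUΩ hqU) (hNc.isOpen_compl.mem_nhds hqN)
  have hV := IsProperOpen.of_closedBall hf.continuousOn hf.isOpen_image
    (fun z hz => (hρΩ hz).2) Metric.isOpen_ball hdis
  set B := Metric.ball (f q) δ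
  set V := Metric.ball q ρ ∩ f ⁻¹' B with hVdef
  have hqV : q ∈ V := ⟨Metric.mem_ball_self hρ, Metric.mem_ball_self hδ⟩
  have hVγ : V ∩ f ⁻¹' (B \ ray v w) ⊆ (range α ∪ range β)ᶜ := by
    rintro z ⟨hzV, hzB⟩ hzγ
    have hzN := (hρΩ (Metric.ball_subset_closedBall hzV.1)).1
    apply hzB.2
    rw [hα, hβ] at hzγ
    rcases hzγ with ⟨t, ht, rfl⟩ | (⟨t, ht, rfl⟩ | hz) | hz
    · exact ⟨t, ht.1, (hfs₁ t (hsub1 ht)).symm⟩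
    · exact ⟨t, ht.1, (hfs₂ t ht).symm⟩
    · exact (hzN (Or.inl hz)).elim
    · exact (hzN (Or.inr hz)).elim
  have hBo : IsOpen (B \ ray v w) := Metric.isOpen_ball.sdiff (isClosed_ray v hw)
  have hEV := hEq V (hV.isOpen_source.mem_nhds hqV)
  obtain ⟨y, ⟨z, ⟨hzE, hzV⟩, rfl⟩, hyr⟩ := ray_not_open (v := v) hw
    (hV.isOpen_image (E ∩ V) inter_subset_right (hEo.inter hV.isOpen_source)) (hEV.image f)
  have hVBo : IsOpen (V ∩ f ⁻¹' (B \ ray v w)) :=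
    hV.continuousOn.isOpen_inter_preimage hV.isOpen_source hBo
  have e : (V ∩ f ⁻¹' (B \ ray v w)) \ (E ∩ (V ∩ f ⁻¹' (B \ ray v w))) =
      (V ∩ f ⁻¹' (B \ ray v w)) ∩ ((range α ∪ range β)ᶜ \ E) := by
    ext z
    constructor
    · rintro ⟨hz, hz'⟩
      exact ⟨hz, hVγ hz, fun h1 => hz' ⟨h1, hz⟩⟩
    · rintro ⟨hz, hz'⟩
      exact ⟨hz, fun h1 => hz'.2 h1.1⟩
  have hfin := hV.image_clopen hBo sdiff_subset
    (slit_isPreconnected Metric.isOpen_ball (convex_ball _ _) (Metric.mem_ball_self hδ) hw)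
    (O := E ∩ (V ∩ f ⁻¹' (B \ ray v w))) inter_subset_right (hEo.inter hVBo)
    (e ▸ hVBo.inter hEo') ⟨z, hzE, hzV, hzV.2, hyr⟩
  have hupos : 0 < ‖u‖ := norm_pos_iff.2 hu
  have hτ : 0 < δ / 2 / ‖u‖ := by positivity
  refine hray (δ / 2 / ‖u‖) hτ (image_mono inter_subset_left (hfin ⟨?_, ?_⟩))
  · rw [Metric.mem_ball, dist_eq_norm, add_sub_cancel_left, norm_mul, norm_real,
      Real.norm_of_nonneg hτ.le, div_mul_cancel₀ _ hupos.ne']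
    linarith
  · rintro ⟨t, ht, e⟩
    have e' := add_left_cancel e
    rcases (mem_Ici.1 ht).eq_or_lt with h2 | h2
    · rw [← h2] at e'
      simp only [ofReal_zero, zero_mul] at e'
      rcases mul_eq_zero.1 e'.symm with h3 | h3
      · exact hτ.ne' (by exact_mod_cast h3)
      · exact hu h3
    · exact huw _ t hτ.le h2 e'.symm

/-! ### Counting preimages -/

/-- Let `N` be a lower semicontinuous `ℕ`-valued function on an open interval `J` such that, if `N` is
constant on an open interval, it takes the same value at its end points. Then `N` is constant.

If the closed set `X` of points of `J` where `N` is not locally constant is nonempty, then by Baire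
`N` is bounded on some relatively open part of `X`. At a point `t₀` where `N` is maximal on this
part, `N` equals `N t₀` on `X` near `t₀`, and the end-point condition propagates this value to the
complementary intervals. -/
theorem constant_of_lsc {J : Set ℝ} (hJ : IsOpen J) (hJc : IsPreconnected J) (N : ℝ → ℕ)
    (hlsc : ∀ t ∈ J, ∀ᶠ s in 𝓝 t, N t ≤ N s)
    (hend : ∀ a b, a < b → Icc a b ⊆ J → ∀ m, (∀ t ∈ Ioo a b, N t = m) → N a = m ∧ N b = m)
    {a b : ℝ} (ha : a ∈ J) (hb : b ∈ J) : N a = N b := by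
  let O : Set ℝ := {t | ∀ᶠ s in 𝓝 t, N s = N t}
  have hO : IsOpen O := by
    rw [isOpen_iff_mem_nhds]
    intro t ht
    have h1 : ∀ᶠ s in 𝓝 t, N s = N t := ht
    filter_upwards [h1.eventually_nhds, h1] with s hs hs'
    change ∀ᶠ r in 𝓝 s, N r = N s
    rw [hs']; exact hs
  have hcont : ∀ S ⊆ O, ContinuousOn N S := by
    intro S hS t ht
    exact (continuousAt_const.congr (EventuallyEq.symm (hS ht))).continuousWithinAt
  suffices hJO : J ⊆ O from hJc.constant (hcont J hJO) ha hb
  by_contra hnot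
  obtain ⟨x, hxJ, hxO⟩ := not_subset.1 hnot
  let X : Set ℝ := J ∩ Oᶜ
  have hXlc : LocallyCompactSpace X := (hJ.isLocallyClosed.inter hO.isClosed_compl.isLocallyClosed).locallyCompactSpace
  have hXne : Nonempty X := ⟨⟨x, hxJ, hxO⟩⟩
  have hclosed : ∀ k : ℕ, IsClosed {t : X | N t ≤ k} := by
    intro k
    rw [← isOpen_compl_iff, isOpen_iff_mem_nhds]
    intro t ht
    have h1 : ∀ᶠ s : X in 𝓝 t, N t ≤ N s :=
      continuous_subtype_val.continuousAt.eventually (hlsc t t.2.1)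
    filter_upwards [h1] with s hs hs'
    exact ht (hs.trans hs')
  obtain ⟨k, ⟨y, hy⟩⟩ := nonempty_interior_of_iUnion_of_closed hclosed (by
    ext t
    simp only [mem_iUnion, mem_univ, iff_true]
    exact ⟨N t, le_refl (N t)⟩)
  obtain ⟨G', hG', hG'e⟩ := isOpen_induced_iff.1 (isOpen_interior (s := {t : X | N t ≤ k}))
  have hGle : ∀ t ∈ G' ∩ X, N t ≤ k := by
    rintro t ⟨htG, htX⟩
    have : (⟨t, htX⟩ : X) ∈ interior {t : X | N t ≤ k} := by rw [← hG'e]; exact htG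
    have h2 := interior_subset this
    exact h2
  have hGne : (N '' (G' ∩ X)).Nonempty := by
    refine ⟨_, y, ⟨?_, y.2⟩, rfl⟩
    rw [← hG'e] at hy; exact hy
  have hGb : BddAbove (N '' (G' ∩ X)) := ⟨k, by rintro _ ⟨t, ht, rfl⟩; exact hGle t ht⟩
  obtain ⟨t₀, ht₀, hM⟩ := Nat.sSup_mem hGne hGb
  have hmax : ∀ t ∈ G' ∩ X, N t ≤ N t₀ := by
    intro t ht; rw [hM]; exact le_csSup hGb ⟨t, ht, rfl⟩
  have hev : ∀ᶠ s in 𝓝 t₀, N t₀ ≤ N s ∧ s ∈ G' ∧ s ∈ J :=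
    (hlsc t₀ ht₀.2.1).and ((hG'.eventually_mem ht₀.1).and (hJ.eventually_mem ht₀.2.1))
  obtain ⟨ε, hε, hball⟩ := Metric.eventually_nhds_iff_ball.1 hev
  have hconn : ∀ s ∈ Metric.ball t₀ ε, uIcc t₀ s ⊆ Metric.ball t₀ ε := by
    intro s hs
    rw [← segment_eq_uIcc]
    exact (convex_ball t₀ ε).segment_subset (Metric.mem_ball_self hε) hs
  obtain ⟨s, hsb, hsne⟩ : ∃ s ∈ Metric.ball t₀ ε, N s ≠ N t₀ := by
    by_contra! hcon
    exact ht₀.2.2 (Filter.mem_of_superset (Metric.ball_mem_nhds t₀ hε) hcon)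
  have hXM : ∀ t ∈ Metric.ball t₀ ε, t ∉ O → N t = N t₀ := by
    intro t ht htO
    have h1 := hball t ht
    exact le_antisymm (hmax t ⟨h1.2.1, h1.2.2, htO⟩) h1.1
  have hsO : s ∈ O := by
    by_contra h; exact hsne (hXM s hsb h)
  have hst : s ≠ t₀ := fun h => hsne (by rw [h])
  have hsub := hconn s hsb
  have hcpt : IsCompact (uIcc t₀ s \ O) := isCompact_uIcc.diff hO
  have hne : (uIcc t₀ s \ O).Nonempty := ⟨t₀, left_mem_uIcc, ht₀.2.2⟩
  rcases hst.lt_or_gt with h | h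
  · rw [uIcc_of_ge h.le] at hcpt hne hsub
    obtain ⟨c, ⟨hc1, hcO⟩, hc⟩ := hcpt.exists_isLeast hne
    have hsc : s < c := lt_of_le_of_ne hc1.1 fun e => hcO (e ▸ hsO)
    have hIntO : Ico s c ⊆ O := by
      intro t ht
      by_contra htO
      exact absurd (hc ⟨⟨ht.1, ht.2.le.trans hc1.2⟩, htO⟩) (not_le.2 ht.2)
    have h1 := (hend s c hsc (fun t ht => (hball t (hsub ⟨ht.1, ht.2.trans hc1.2⟩)).2.2) (N s)
      fun t ht => isPreconnected_Ico.constant (hcont _ hIntO) ⟨ht.1.le, ht.2⟩ ⟨le_rfl, hsc⟩).2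
    exact hsne (h1.symm.trans (hXM c (hsub hc1) hcO))
  · rw [uIcc_of_le h.le] at hcpt hne hsub
    obtain ⟨c, ⟨hc1, hcO⟩, hc⟩ := hcpt.exists_isGreatest hne
    have hsc : c < s := lt_of_le_of_ne hc1.2 fun e => hcO (e ▸ hsO)
    have hIntO : Ioc c s ⊆ O := by
      intro t ht
      by_contra htO
      exact absurd (hc ⟨⟨hc1.1.trans ht.1.le, ht.2⟩, htO⟩) (not_le.2 ht.1)
    have h1 := (hend c s hsc (fun t ht => (hball t (hsub ⟨hc1.1.trans ht.1, ht.2⟩)).2.2) (N s)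
      fun t ht => isPreconnected_Ioc.constant (hcont _ hIntO) ⟨ht.1, ht.2.le⟩ ⟨hsc, le_rfl⟩).1
    exact hsne (h1.symm.trans (hXM c (hsub hc1) hcO))

theorem IsProperOpen.finite_fiber {f : ℂ → ℂ} {Ω V B : Set ℂ} (hf : IsOpenDiscrete f Ω)
    (hV : IsProperOpen f V B) (hVΩ : V ⊆ Ω) (y : ℂ) : (V ∩ f ⁻¹' {y}).Finite := by
  by_cases hy : y ∈ B
  · refine (hV.isCompact_preimage {y} (singleton_subset_iff.2 hy) isCompact_singleton).finite ?_
    rw [isDiscrete_iff_forall_mem_exists_isOpen]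
    rintro x ⟨hxV, hx⟩
    obtain ⟨O, hO, hxO, hOe⟩ := hf.discrete y x ⟨hVΩ hxV, hx⟩
    refine ⟨O, hO, ?_⟩
    apply Subset.antisymm
    · rw [← hOe]
      exact inter_subset_inter_right _ (inter_subset_inter_left _ hVΩ)
    · rintro _ rfl
      exact ⟨hxO, hxV, hx⟩
  · convert finite_empty
    ext z
    simp only [mem_inter_iff, mem_preimage, mem_singleton_iff, mem_empty_iff_false, iff_false]
    rintro ⟨h1, rfl⟩
    exact hy (hV.mapsTo h1)

/-- Fibres of a proper map depend upper semicontinuously on the base point. -/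
theorem IsProperOpen.fiber_subset {f : ℂ → ℂ} {V B Q : Set ℂ} (hV : IsProperOpen f V B)
    (hB : IsOpen B) {y : ℂ} (hy : y ∈ B) (hQ : IsOpen Q) (hyQ : V ∩ f ⁻¹' {y} ⊆ Q) :
    ∀ᶠ y' in 𝓝 y, V ∩ f ⁻¹' {y'} ⊆ Q := by
  obtain ⟨K, hKc, hyK, hKB⟩ := exists_compact_subset hB hy
  have h1 : IsCompact ((V ∩ f ⁻¹' K) \ Q) := (hV.isCompact_preimage K hKB hKc).diff hQ
  have h2 : IsCompact (f '' ((V ∩ f ⁻¹' K) \ Q)) :=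
    h1.image_of_continuousOn (hV.continuousOn.mono (sdiff_subset.trans inter_subset_left))
  have h3 : y ∉ f '' ((V ∩ f ⁻¹' K) \ Q) := by
    rintro ⟨z, ⟨⟨hzV, -⟩, hzQ⟩, hz⟩
    exact hzQ (hyQ ⟨hzV, hz⟩)
  filter_upwards [h2.isClosed.isOpen_compl.mem_nhds h3, isOpen_interior.mem_nhds hyK] with y' h4 h5
  rintro z ⟨hzV, hz⟩
  by_contra hzQ
  have hz' : f z = y' := hz
  refine h4 ⟨z, ⟨⟨hzV, ?_⟩, hzQ⟩, hz⟩
  exact (hz' ▸ interior_subset h5 : f z ∈ K)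

/-- By openness, each fibre near the fibre over `y` has a point in each of the given disjoint
neighbourhoods `O x` of the points `x` of the latter. -/
theorem IsProperOpen.exists_injection {f : ℂ → ℂ} {V B : Set ℂ} (hV : IsProperOpen f V B)
    (hfin : ∀ y, (V ∩ f ⁻¹' {y}).Finite) (y : ℂ) {O : ℂ → Set ℂ}
    (hO : ∀ x ∈ V ∩ f ⁻¹' {y}, x ∈ O x ∧ IsOpen (O x))
    (hdisj : (V ∩ f ⁻¹' {y}).PairwiseDisjoint O) :
    ∀ᶠ y' in 𝓝 y, ∃ g : ℂ → ℂ, (∀ x ∈ V ∩ f ⁻¹' {y}, g x ∈ V ∩ f ⁻¹' {y'} ∩ O x) ∧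
      InjOn g (V ∩ f ⁻¹' {y}) := by
  have h1 : ∀ x ∈ V ∩ f ⁻¹' {y}, ∀ᶠ y' in 𝓝 y, y' ∈ f '' (V ∩ O x) := by
    intro x hx
    refine (hV.isOpen_image _ inter_subset_left (hV.isOpen_source.inter (hO x hx).2)).mem_nhds ?_
    exact ⟨x, ⟨hx.1, (hO x hx).1⟩, hx.2⟩
  filter_upwards [(hfin y).eventually_all.2 h1] with y' hy'
  choose! g hg using hy'
  refine ⟨g, fun x hx => ⟨⟨(hg x hx).1.1, (hg x hx).2⟩, (hg x hx).1.2⟩, ?_⟩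
  intro a ha b hb hab
  by_contra hne
  exact disjoint_left.1 (hdisj ha hb hne) (hg a ha).1.2 (hab ▸ (hg b hb).1.2)

/-- The number of preimages is lower semicontinuous. -/
theorem IsProperOpen.ncard_lsc {f : ℂ → ℂ} {V B : Set ℂ} (hV : IsProperOpen f V B)
    (hfin : ∀ y, (V ∩ f ⁻¹' {y}).Finite) (y : ℂ) :
    ∀ᶠ y' in 𝓝 y, (V ∩ f ⁻¹' {y}).ncard ≤ (V ∩ f ⁻¹' {y'}).ncard := by
  obtain ⟨O, hO, hdisj⟩ := (hfin y).t2_separation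
  filter_upwards [hV.exists_injection hfin y (fun x _ => hO x) hdisj] with y' ⟨g, hg, hinj⟩
  exact ncard_le_ncard_of_injOn g (fun x hx => (hg x hx).1) hinj (hfin y')

/-! ### Sections over a segment -/

/-- If all points of an open segment have the same number of preimages, then the restriction of `f`
over the segment is a covering, and so through any two distinct points of a fibre pass disjoint
continuous sections. -/
theorem IsProperOpen.exists_sections {f : ℂ → ℂ} {V B : Set ℂ} (hV : IsProperOpen f V B)
    (hfin : ∀ y, (V ∩ f ⁻¹' {y}).Finite) {v w : ℂ} (hw : w ≠ 0)
    {b : ℝ} (hseg : ∀ t ∈ Ioo 0 b, v + t * w ∈ B) {m : ℕ}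
    (hm : ∀ t ∈ Ioo 0 b, (V ∩ f ⁻¹' {v + t * w}).ncard = m) {t₀ : ℝ} (ht₀ : t₀ ∈ Ioo 0 b)
    {z₁ z₂ : ℂ} (hz₁ : z₁ ∈ V ∩ f ⁻¹' {v + t₀ * w}) (hz₂ : z₂ ∈ V ∩ f ⁻¹' {v + t₀ * w})
    (hne : z₁ ≠ z₂) :
    ∃ s₁ s₂ : ℝ → ℂ, ContinuousOn s₁ (Ioo 0 b) ∧ ContinuousOn s₂ (Ioo 0 b) ∧
      (∀ t ∈ Ioo 0 b, s₁ t ∈ V ∩ f ⁻¹' {v + t * w}) ∧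
      (∀ t ∈ Ioo 0 b, s₂ t ∈ V ∩ f ⁻¹' {v + t * w}) ∧
      s₁ t₀ = z₁ ∧ s₂ t₀ = z₂ ∧ ∀ t ∈ Ioo 0 b, s₁ t ≠ s₂ t := by
  let ℓ : ℝ → ℂ := fun t => v + t * w
  have hℓ : Continuous ℓ := by fun_prop
  let T : ℂ → ℝ := fun y => ((y - v) / w).re
  have hT : ∀ t, T (ℓ t) = t := by
    intro t; simp [T, ℓ, hw]
  have hTc : Continuous T := by fun_prop
  let Z : Set ℂ := V ∩ f ⁻¹' (ℓ '' Ioo 0 b)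
  have hfZ : ContinuousOn f Z := hV.continuousOn.mono inter_subset_left
  have hfZ' : Continuous (fun x : Z => f x) := hfZ.domRestrict
  have hTZ : ∀ x : Z, T (f x) ∈ Ioo 0 b ∧ ℓ (T (f x)) = f x := by
    rintro ⟨x, hxV, t, ht, e⟩
    simp only [← e, hT]
    exact ⟨ht, trivial⟩
  let p : Z → Ioo 0 b := fun x => ⟨T (f x), (hTZ x).1⟩
  have hpc : Continuous p := (hTc.comp hfZ').subtype_mk _
  have hpℓ : ∀ x : Z, ℓ (p x) = f x := fun x => (hTZ x).2
  have hpp : IsProperMap p := by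
    rw [isProperMap_iff_isCompact_preimage]
    refine ⟨hpc, fun K hK => ?_⟩
    rw [Subtype.isCompact_iff]
    have e : (Subtype.val '' (p ⁻¹' K) : Set ℂ) = V ∩ f ⁻¹' (ℓ '' (Subtype.val '' K)) := by
      ext z
      constructor
      · rintro ⟨x, hx, rfl⟩
        exact ⟨x.2.1, p x, ⟨p x, hx, rfl⟩, hpℓ x⟩
      · rintro ⟨hzV, _, ⟨t, htK, rfl⟩, e⟩
        refine ⟨⟨z, hzV, t, t.2, e⟩, ?_, rfl⟩
        have : p ⟨z, hzV, t, t.2, e⟩ = t := by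
          apply Subtype.ext
          change T (f z) = t
          rw [← e, hT]
        rw [mem_preimage, this]; exact htK
    rw [e]
    refine hV.isCompact_preimage _ ?_ ((hK.image continuous_subtype_val).image hℓ)
    rintro _ ⟨_, ⟨t, -, rfl⟩, rfl⟩
    exact hseg t t.2
  have hpo : IsOpenMap p := by
    rw [isOpenMap_iff_nhds_le]
    intro x S hS
    rw [mem_map, nhds_subtype_eq_comap, mem_comap] at hS
    obtain ⟨A, hA, hAS⟩ := hS
    have h1 : f '' (V ∩ interior A) ∈ 𝓝 (ℓ (p x)) := by
      refine (hV.isOpen_image _ inter_subset_left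
        (hV.isOpen_source.inter isOpen_interior)).mem_nhds ?_
      exact ⟨x, ⟨x.2.1, mem_interior_iff_mem_nhds.2 hA⟩, (hpℓ x).symm⟩
    have h2 : ∀ᶠ t : Ioo 0 b in 𝓝 (p x), ℓ t ∈ f '' (V ∩ interior A) :=
      (hℓ.comp continuous_subtype_val).continuousAt.eventually_mem h1
    filter_upwards [h2] with t ⟨z, hz, e⟩
    have hzS : (⟨z, hz.1, t, t.2, e.symm⟩ : Z) ∈ p ⁻¹' S := hAS (interior_subset (s := A) hz.2)
    have : p ⟨z, hz.1, t, t.2, e.symm⟩ = t := by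
      apply Subtype.ext
      change T (f z) = t
      rw [e, hT]
    rw [mem_preimage, this] at hzS
    exact hzS
  -- local injectivity: near `x`, each fibre has exactly one point near each point of the fibre of `x`,
  -- because the numbers of points agree
  have hploc : ∀ x : Z, ∃ S : Set Z, IsOpen S ∧ x ∈ S ∧ InjOn p S := by
    intro x
    obtain ⟨O, hO, hdisj⟩ := (hfin (f x)).t2_separation
    obtain ⟨Y, hY, hYo, hxY⟩ := eventually_nhds_iff.1
      (hV.exists_injection hfin (f x) (fun a _ => hO a) hdisj)
    refine ⟨Subtype.val ⁻¹' (O x) ∩ (fun x : Z => f x) ⁻¹' Y,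
      ((hO x).2.preimage continuous_subtype_val).inter (hYo.preimage hfZ'),
      ⟨(hO x).1, hxY⟩, ?_⟩
    rintro a ⟨haO, haY⟩ c ⟨hcO, hcY⟩ hac
    have hfac : f a = f c := by rw [← hpℓ a, ← hpℓ c, hac]
    obtain ⟨g, hg, hginj⟩ := hY (f a) haY
    have hsurj : g '' (V ∩ f ⁻¹' {f x}) = V ∩ f ⁻¹' {f a} := by
      refine eq_of_subset_of_ncard_le ?_ ?_ (hfin (f a))
      · rintro _ ⟨y, hy, rfl⟩; exact (hg y hy).1
      · rw [hginj.ncard_image, ← hpℓ a, ← hpℓ x]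
        change (V ∩ f ⁻¹' {v + (p a : ℝ) * w}).ncard ≤ (V ∩ f ⁻¹' {v + (p x : ℝ) * w}).ncard
        rw [hm _ (p a).2, hm _ (p x).2]
    have hxF : (x : ℂ) ∈ V ∩ f ⁻¹' {f x} := ⟨x.2.1, rfl⟩
    have key : ∀ d ∈ V ∩ f ⁻¹' {f a}, d ∈ O x → d = g x := by
      intro d hd hdO
      rw [← hsurj] at hd
      obtain ⟨y, hy, rfl⟩ := hd
      by_contra hne
      have hyx : y ≠ x := fun h => hne (by rw [h])
      exact disjoint_left.1 (hdisj hy hxF hyx) (hg y hy).2 hdO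
    apply Subtype.ext
    rw [key a ⟨a.2.1, rfl⟩ haO, key c ⟨c.2.1, hfac.symm⟩ hcO]
  have hpfin : ∀ t, (p ⁻¹' {t}).Finite := by
    intro t
    refine Finite.of_finite_image ((hfin (ℓ t)).subset ?_) Subtype.val_injective.injOn
    rintro _ ⟨x, hx, rfl⟩
    refine ⟨x.2.1, ?_⟩
    have hx' : p x = t := hx
    rw [mem_preimage, mem_singleton_iff, ← hpℓ x, hx']
  have hcov : IsCoveringMap p := by
    intro t
    refine hpp.isClosedMap.isEvenlyCovered_of_openPartialHomeomorph (hpfin t) ?_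
    intro x _
    obtain ⟨S, hS, hxS, hinj⟩ := hploc x
    have : Nonempty Z := ⟨x⟩
    exact ⟨OpenPartialHomeomorph.ofContinuousOpen (hinj.toPartialEquiv p S) hpc.continuousOn hpo hS,
      hxS, rfl⟩
  have : ContractibleSpace (Ioo 0 b) := (convex_Ioo 0 b).contractibleSpace ⟨t₀, ht₀⟩
  have : LocallyPathConnectedSpace (Ioo 0 b) := isOpen_Ioo.locallyPathConnectedSpace
  have hlift : ∀ z ∈ V ∩ f ⁻¹' {v + t₀ * w}, ∃ F : C(Ioo 0 b, Z), (F ⟨t₀, ht₀⟩ : ℂ) = z ∧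
      p ∘ F = id := by
    rintro z ⟨hzV, hz⟩
    have hz' : f z = ℓ t₀ := hz
    have hpz : p ⟨z, hzV, t₀, ht₀, hz'.symm⟩ = ⟨t₀, ht₀⟩ := by
      apply Subtype.ext
      change T (f z) = t₀
      rw [hz', hT]
    obtain ⟨F, ⟨hF1, hF2⟩, -⟩ := hcov.existsUnique_continuousMap_lifts (ContinuousMap.id _)
      ⟨t₀, ht₀⟩ _ hpz
    exact ⟨F, by rw [hF1], hF2⟩
  obtain ⟨F₁, hF₁, hF₁p⟩ := hlift z₁ hz₁
  obtain ⟨F₂, hF₂, hF₂p⟩ := hlift z₂ hz₂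
  have hext : ∀ F : C(Ioo 0 b, Z), p ∘ F = id → ∃ s : ℝ → ℂ, ContinuousOn s (Ioo 0 b) ∧
      (∀ t ∈ Ioo 0 b, s t ∈ V ∩ f ⁻¹' {v + t * w}) ∧
      ∀ t (ht : t ∈ Ioo 0 b), s t = F ⟨t, ht⟩ := by
    intro F hF
    classical
    have hs : ∀ t (ht : t ∈ Ioo 0 b),
        (if ht : t ∈ Ioo 0 b then (F ⟨t, ht⟩ : ℂ) else 0) = F ⟨t, ht⟩ := fun t ht => dif_pos ht
    refine ⟨fun t => if ht : t ∈ Ioo 0 b then (F ⟨t, ht⟩ : ℂ) else 0, ?_, ?_, hs⟩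
    · rw [continuousOn_iff_continuous_domRestrict]
      have e : (Ioo 0 b).domRestrict (fun t => if ht : t ∈ Ioo 0 b then (F ⟨t, ht⟩ : ℂ) else 0) =
          fun t => (F t : ℂ) := by
        funext t; exact hs t t.2
      rw [e]; fun_prop
    · intro t ht
      simp only [hs t ht]
      refine ⟨(F ⟨t, ht⟩).2.1, ?_⟩
      rw [mem_preimage, mem_singleton_iff, ← hpℓ]
      have : p (F ⟨t, ht⟩) = ⟨t, ht⟩ := congrFun hF ⟨t, ht⟩
      rw [this]
  obtain ⟨s₁, c₁, m₁, e₁⟩ := hext F₁ hF₁p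
  obtain ⟨s₂, c₂, m₂, e₂⟩ := hext F₂ hF₂p
  refine ⟨s₁, s₂, c₁, c₂, m₁, m₂, (e₁ t₀ ht₀).trans hF₁, (e₂ t₀ ht₀).trans hF₂, ?_⟩
  intro t ht e
  rw [e₁ t ht, e₂ t ht] at e
  have := hcov.eq_of_comp_eq F₁.continuous F₂.continuous (hF₁p.trans hF₂p.symm) ⟨t, ht⟩
    (Subtype.ext e)
  exact hne (by rw [← hF₁, ← hF₂, this])

/-! ### Injectivity away from the centre of a normal neighbourhood -/

/-- Any two arcs in `V` starting at the same point and lying over the same segment (with the same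
parametrization) meet again. -/
def NoDoubleArc (f : ℂ → ℂ) (V : Set ℂ) : Prop :=
  ∀ w : ℂ, w ≠ 0 → ∀ s₁ s₂ : ℝ → ℂ, ContinuousOn s₁ (Icc 0 1) → ContinuousOn s₂ (Icc 0 1) →
    MapsTo s₁ (Icc 0 1) V → MapsTo s₂ (Icc 0 1) V → s₂ 0 = s₁ 0 →
    (∀ t ∈ Icc (0 : ℝ) 1, f (s₁ t) = f (s₁ 0) + t * w) →
    (∀ t ∈ Icc (0 : ℝ) 1, f (s₂ t) = f (s₁ 0) + t * w) →
    ∃ t ∈ Ioc (0 : ℝ) 1, s₁ t = s₂ t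

/-- If all points of an open segment have `m` preimages, so does its end point `v`. Otherwise `v` has
fewer preimages, so two of the sections over the segment converge to the same point over `v`, which
gives two arcs contradicting `NoDoubleArc`. -/
theorem IsProperOpen.ncard_left {f : ℂ → ℂ} {V B : Set ℂ} (hV : IsProperOpen f V B)
    (hB : IsOpen B) (hfin : ∀ y, (V ∩ f ⁻¹' {y}).Finite) (hno : NoDoubleArc f V) {v w : ℂ}
    (hw : w ≠ 0) {b : ℝ} (hb : 0 < b) (hv : v ∈ B) (hseg : ∀ t ∈ Ioo 0 b, v + t * w ∈ B) {m : ℕ}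
    (hm : ∀ t ∈ Ioo 0 b, (V ∩ f ⁻¹' {v + t * w}).ncard = m) :
    (V ∩ f ⁻¹' {v}).ncard = m := by
  have hℓ : Tendsto (fun t : ℝ => v + t * w) (𝓝[>] 0) (𝓝 v) := by
    have : Continuous (fun t : ℝ => v + t * w) := by fun_prop
    have := this.tendsto 0
    simp only [ofReal_zero, zero_mul, add_zero] at this
    exact this.mono_left nhdsWithin_le_nhds
  have hIoo : ∀ ε > 0, ∀ᶠ t in 𝓝[>] (0 : ℝ), t ∈ Ioo 0 ε := fun ε hε => Ioo_mem_nhdsGT hε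
  have hle : (V ∩ f ⁻¹' {v}).ncard ≤ m := by
    obtain ⟨t, h1, h2⟩ := ((hℓ.eventually (hV.ncard_lsc hfin v)).and (hIoo b hb)).exists
    rwa [hm t h2] at h1
  refine hle.antisymm (not_lt.1 fun hlt => ?_)
  obtain ⟨O, hO, hdisj⟩ := (hfin v).t2_separation
  have hQ : ∀ᶠ t : ℝ in 𝓝[>] 0, V ∩ f ⁻¹' {v + t * w} ⊆ ⋃ x ∈ V ∩ f ⁻¹' {v}, O x :=
    hℓ.eventually (hV.fiber_subset hB hv (isOpen_biUnion fun x _ => (hO x).2)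
      fun x hx => mem_biUnion hx (hO x).1)
  obtain ⟨ε', hε'0, hε'⟩ := mem_nhdsGT_iff_exists_Ioo_subset.1 hQ
  obtain ⟨t₀, ht₀0, ht₀⟩ := exists_between (lt_min (mem_Ioi.1 hε'0) hb)
  have ht₀ε : t₀ < ε' := ht₀.trans_le (min_le_left _ _)
  have ht₀b : t₀ < b := ht₀.trans_le (min_le_right _ _)
  have hsubO : ∀ t ∈ Ioc 0 t₀, V ∩ f ⁻¹' {v + t * w} ⊆ ⋃ x ∈ V ∩ f ⁻¹' {v}, O x :=
    fun t ht => hε' ⟨ht.1, ht.2.trans_lt ht₀ε⟩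
  have hsubI : Ioc 0 t₀ ⊆ Ioo 0 b := fun t ht => ⟨ht.1, ht.2.trans_lt ht₀b⟩
  have ht₀m : t₀ ∈ Ioc 0 t₀ := ⟨ht₀0, le_rfl⟩
  -- two points of the fibre over `v + t₀ w` in the same `O x`
  have hch : ∀ z ∈ V ∩ f ⁻¹' {v + t₀ * w}, ∃ x ∈ V ∩ f ⁻¹' {v}, z ∈ O x := by
    intro z hz
    simpa only [mem_iUnion, exists_prop] using hsubO t₀ ht₀m hz
  choose! φ hφ hφO using hch
  rw [← hm t₀ (hsubI ht₀m)] at hlt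
  obtain ⟨z₁, hz₁, z₂, hz₂, hne, hφe⟩ :=
    exists_ne_map_eq_of_ncard_lt_of_maps_to hlt hφ (hfin v)
  obtain ⟨s₁, s₂, c₁, c₂, m₁, m₂, e₁, e₂, hs⟩ :=
    hV.exists_sections hfin hw hseg hm (hsubI ht₀m) hz₁ hz₂ hne
  set x := φ z₁ with hx
  have hxF : x ∈ V ∩ f ⁻¹' {v} := hφ z₁ hz₁
  -- a section passing through `O x` converges to `x`
  have hlim : ∀ s : ℝ → ℂ, ContinuousOn s (Ioo 0 b) →
      (∀ t ∈ Ioo 0 b, s t ∈ V ∩ f ⁻¹' {v + t * w}) → s t₀ ∈ O x →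
      Tendsto s (𝓝[>] 0) (𝓝 x) := by
    intro s hsc hsm hsO
    have hoth : IsOpen (⋃ y ∈ (V ∩ f ⁻¹' {v}) \ {x}, O y) := isOpen_biUnion fun y _ => (hO y).2
    have hdis : Disjoint (O x) (⋃ y ∈ (V ∩ f ⁻¹' {v}) \ {x}, O y) := by
      simp only [disjoint_iUnion_right]
      rintro y ⟨hy, hyx⟩
      exact hdisj hxF hy fun h => hyx h.symm
    have hstay : s '' Ioc 0 t₀ ⊆ O x := by
      refine IsPreconnected.subset_left_of_subset_union (hO x).2 hoth hdis ?_
        ⟨s t₀, ⟨t₀, ht₀m, rfl⟩, hsO⟩ (isPreconnected_Ioc.image s (hsc.mono hsubI))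
      rintro _ ⟨t, ht, rfl⟩
      obtain ⟨y, hy, hty⟩ : ∃ y ∈ V ∩ f ⁻¹' {v}, s t ∈ O y := by
        simpa only [mem_iUnion, exists_prop] using hsubO t ht (hsm t (hsubI ht))
      by_cases hyx : y = x
      · left; rw [← hyx]; exact hty
      · right; exact mem_biUnion (⟨hy, hyx⟩ : y ∈ (V ∩ f ⁻¹' {v}) \ {x}) hty
    rw [tendsto_iff_forall_eventually_mem]
    intro A hA
    have h1 : ∀ᶠ t : ℝ in 𝓝[>] 0,
        V ∩ f ⁻¹' {v + t * w} ⊆ interior A ∪ ⋃ y ∈ (V ∩ f ⁻¹' {v}) \ {x}, O y := by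
      refine hℓ.eventually (hV.fiber_subset hB hv (isOpen_interior.union hoth) ?_)
      intro y hy
      by_cases hyx : y = x
      · left; rw [hyx]; exact mem_interior_iff_mem_nhds.2 hA
      · right; exact mem_biUnion (⟨hy, hyx⟩ : y ∈ (V ∩ f ⁻¹' {v}) \ {x}) (hO y).1
    filter_upwards [h1, hIoo t₀ ht₀0] with t h2 h3
    have h4 : t ∈ Ioc 0 t₀ := ⟨h3.1, h3.2.le⟩
    rcases h2 (hsm t (hsubI h4)) with h5 | h5
    · exact interior_subset h5
    · exact (disjoint_left.1 hdis (hstay ⟨t, h4, rfl⟩) h5).elim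
  have l₁ := hlim s₁ c₁ m₁ (e₁ ▸ hφO z₁ hz₁)
  have l₂ := hlim s₂ c₂ m₂ (by rw [e₂, hφe]; exact hφO z₂ hz₂)
  -- the sections over `(0, t₀]`, extended by `x` at `0` and reparametrized to `[0, 1]`
  have harc : ∀ s : ℝ → ℂ, ContinuousOn s (Ioo 0 b) →
      (∀ t ∈ Ioo 0 b, s t ∈ V ∩ f ⁻¹' {v + t * w}) → Tendsto s (𝓝[>] 0) (𝓝 x) →
      ContinuousOn (fun t => Function.update s 0 x (t₀ * t)) (Icc 0 1) ∧
      MapsTo (fun t => Function.update s 0 x (t₀ * t)) (Icc 0 1) V ∧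
      (∀ t ∈ Icc (0 : ℝ) 1, f (Function.update s 0 x (t₀ * t)) = v + t * (t₀ * w)) ∧
      ∀ t ∈ Ioc (0 : ℝ) 1, Function.update s 0 x (t₀ * t) = s (t₀ * t) := by
    intro s hsc hsm hsl
    have hmaps : MapsTo (fun t => t₀ * t) (Icc 0 1) (Icc 0 t₀) := by
      intro t ht
      exact ⟨mul_nonneg ht₀0.le ht.1, mul_le_of_le_one_right ht₀0.le ht.2⟩
    have hc : ContinuousOn (Function.update s 0 x) (Icc 0 t₀) := by
      intro t ht
      rcases ht.1.eq_or_lt with h0 | h0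
      · rw [← h0, continuousWithinAt_update_same]
        refine hsl.mono_left (nhdsWithin_mono _ ?_)
        rintro r ⟨hr, hr0⟩
        exact lt_of_le_of_ne hr.1 fun h => hr0 h.symm
      · rw [continuousWithinAt_update_of_ne h0.ne']
        exact (hsc.continuousAt (isOpen_Ioo.mem_nhds (hsubI ⟨h0, ht.2⟩))).continuousWithinAt
    have hupd : ∀ t ∈ Ioc (0 : ℝ) 1, Function.update s 0 x (t₀ * t) = s (t₀ * t) :=
      fun t ht => Function.update_of_ne (mul_pos ht₀0 ht.1).ne' _ _
    have hval : ∀ t ∈ Icc (0 : ℝ) 1,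
        Function.update s 0 x (t₀ * t) ∈ V ∩ f ⁻¹' {v + t * (t₀ * w)} := by
      intro t ht
      rcases ht.1.eq_or_lt with h0 | h0
      · rw [← h0]
        simpa using hxF
      · rw [hupd t ⟨h0, ht.2⟩]
        have := hsm (t₀ * t) (hsubI ⟨mul_pos ht₀0 h0, (hmaps ht).2⟩)
        have e : v + ((t₀ * t : ℝ) : ℂ) * w = v + t * (t₀ * w) := by push_cast; ring
        rwa [e] at this
    exact ⟨hc.comp (by fun_prop) hmaps, fun t ht => (hval t ht).1, fun t ht => (hval t ht).2, hupd⟩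
  obtain ⟨a₁, b₁, d₁, u₁⟩ := harc s₁ c₁ m₁ l₁
  obtain ⟨a₂, b₂, d₂, u₂⟩ := harc s₂ c₂ m₂ l₂
  have hfx : f x = v := hxF.2
  have ht₀w : (t₀ : ℂ) * w ≠ 0 := mul_ne_zero (by exact_mod_cast ht₀0.ne') hw
  obtain ⟨t, ht, e⟩ := hno (t₀ * w) ht₀w _ _ a₁ a₂ b₁ b₂ (by simp)
    (by intro t ht; simpa [hfx] using d₁ t ht) (by intro t ht; simpa [hfx] using d₂ t ht)
  rw [u₁ t ht, u₂ t ht] at e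
  refine hs (t₀ * t) (hsubI ⟨mul_pos ht₀0 ht.1, mul_le_of_le_one_right ht₀0.le ht.2⟩) e

/-- A proper open map to a convex set without double arcs is injective as soon as one fibre is a
single point, because the number of preimages is constant on the segment joining two points of the
image. -/
theorem IsProperOpen.injOn_of_noDoubleArc {f : ℂ → ℂ} {V B : Set ℂ} (hV : IsProperOpen f V B)
    (hB : IsOpen B) (hBc : Convex ℝ B) (hfin : ∀ y, (V ∩ f ⁻¹' {y}).Finite)
    (hno : NoDoubleArc f V) {q : ℂ} (hqV : q ∈ V) (hq : ∀ z ∈ V, f z = f q → z = q) :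
    InjOn f V := by
  intro a ha c hc hac
  by_cases hw : f a - f q = 0
  · have h1 := sub_eq_zero.1 hw
    rw [hq a ha h1, hq c hc (hac ▸ h1)]
  set w := f a - f q with hwdef
  let J : Set ℝ := (fun t : ℝ => f q + t * w) ⁻¹' B
  have hJo : IsOpen J := hB.preimage (by fun_prop)
  have hJc : Convex ℝ J := by
    intro s hs t ht α β hα hβ hαβ
    have h1 := hBc hs ht hα hβ hαβ
    have hα' : (α : ℂ) = 1 - β := by rw [← ofReal_one, ← hαβ]; push_cast; ring
    change f q + ((α • s + β • t : ℝ) : ℂ) * w ∈ B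
    convert h1 using 1
    simp only [smul_eq_mul, real_smul]
    push_cast
    rw [hα']
    ring
  have h0 : (0 : ℝ) ∈ J := by
    change f q + ((0 : ℝ) : ℂ) * w ∈ B
    simpa using hV.mapsTo hqV
  have h1 : (1 : ℝ) ∈ J := by
    change f q + ((1 : ℝ) : ℂ) * w ∈ B
    simpa [hwdef] using hV.mapsTo ha
  have hN := constant_of_lsc hJo hJc.isPreconnected
    (fun t => (V ∩ f ⁻¹' {f q + t * w}).ncard) (by
      intro t _
      have hcont : Continuous fun t : ℝ => f q + t * w := by fun_prop
      exact hcont.continuousAt.eventually (hV.ncard_lsc hfin (f q + t * w))) (by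
      intro s t hst hJ m hm
      have hs := hJ (left_mem_Icc.2 hst.le)
      have ht := hJ (right_mem_Icc.2 hst.le)
      constructor
      · refine hV.ncard_left hB hfin hno hw (sub_pos.2 hst) hs ?_ ?_
        · intro r hr
          have := hJ (show s + r ∈ Icc s t from ⟨by linarith [hr.1], by linarith [hr.2]⟩)
          change f q + ((s + r : ℝ) : ℂ) * w ∈ B at this
          convert this using 1
          push_cast; ring
        · intro r hr
          rw [← hm (s + r) ⟨by linarith [hr.1], by linarith [hr.2]⟩]
          congr 4
          push_cast; ring
      · refine hV.ncard_left hB hfin hno (neg_ne_zero.2 hw) (sub_pos.2 hst) ht ?_ ?_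
        · intro r hr
          have := hJ (show t - r ∈ Icc s t from ⟨by linarith [hr.2], by linarith [hr.1]⟩)
          change f q + ((t - r : ℝ) : ℂ) * w ∈ B at this
          convert this using 1
          push_cast; ring
        · intro r hr
          rw [← hm (t - r) ⟨by linarith [hr.2], by linarith [hr.1]⟩]
          congr 4
          push_cast; ring) h0 h1
  have e0 : V ∩ f ⁻¹' {f q + ((0 : ℝ) : ℂ) * w} = {q} := by
    ext z
    simp only [ofReal_zero, zero_mul, add_zero, mem_inter_iff, mem_preimage, mem_singleton_iff]
    exact ⟨fun h => hq z h.1 h.2, fun h => by rw [h]; exact ⟨hqV, rfl⟩⟩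
  have e1 : f q + ((1 : ℝ) : ℂ) * w = f a := by simp [hwdef]
  rw [e0, e1, ncard_singleton] at hN
  obtain ⟨d, hd⟩ := ncard_eq_one.1 hN.symm
  have ha' : a ∈ V ∩ f ⁻¹' {f a} := ⟨ha, rfl⟩
  have hc' : c ∈ V ∩ f ⁻¹' {f a} := ⟨hc, hac.symm⟩
  rw [hd] at ha' hc'
  exact ha'.trans hc'.symm

/-- An injective restriction of `f` to an open set is a homeomorphism onto an open set. -/
theorem IsOpenDiscrete.exists_partialHomeomorph {f : ℂ → ℂ} {Ω V : Set ℂ}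
    (hf : IsOpenDiscrete f Ω) (hVΩ : V ⊆ Ω) (hV : IsOpen V) (hinj : InjOn f V) :
    ∃ e : PartialHomeomorph ℂ ℂ, e.source = V ∧ EqOn f e V := by
  refine ⟨(OpenPartialHomeomorph.ofContinuousOpenRestrict (hinj.toPartialEquiv f V)
    (hf.continuousOn.mono hVΩ) ?_ hV).toPartialHomeomorph, rfl, fun z _ => rfl⟩
  intro S hS
  have h1 := hf.isOpen_image (Subtype.val '' S) ((Subtype.coe_image_subset V S).trans hVΩ)
    (hV.isOpenMap_subtype_val S hS)
  rw [image_image] at h1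
  exact h1

/-- Every point has a neighbourhood such that `f` is locally injective at all other points of it. -/
theorem IsOpenDiscrete.exists_punctured_nhds {f : ℂ → ℂ} {Ω : Set ℂ} (hf : IsOpenDiscrete f Ω)
    {x₀ : ℂ} (hx₀ : x₀ ∈ Ω) : ∃ U : Set ℂ, IsOpen U ∧ x₀ ∈ U ∧ ∀ q ∈ U, q ≠ x₀ →
      ∃ V ⊆ Ω, IsOpen V ∧ q ∈ V ∧ InjOn f V := by
  obtain ⟨R, hR, r, hr, hRΩ, huniq, hdis⟩ := hf.exists_normal hx₀ univ_mem
  have hRΩ' : Metric.closedBall x₀ R ⊆ Ω := fun z hz => (hRΩ hz).2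
  have hU := IsProperOpen.of_closedBall hf.continuousOn hf.isOpen_image hRΩ' Metric.isOpen_ball hdis
  set D := Metric.ball (f x₀) r
  set U := Metric.ball x₀ R ∩ f ⁻¹' D
  have hUuniq : ∀ x ∈ U, f x = f x₀ → x = x₀ :=
    fun x hx => huniq x (Metric.ball_subset_closedBall hx.1)
  refine ⟨U, hU.isOpen_source, ⟨Metric.mem_ball_self hR, Metric.mem_ball_self hr⟩, ?_⟩
  intro q hqU hqx
  have hNn : U ∩ {x₀}ᶜ ∈ 𝓝 q :=
    (hU.isOpen_source.inter isOpen_compl_singleton).mem_nhds ⟨hqU, hqx⟩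
  obtain ⟨ρ, hρ, δ, hδ, hρN, hquniq, hdis'⟩ :=
    hf.exists_normal (hRΩ' (Metric.ball_subset_closedBall hqU.1)) hNn
  have hρΩ : Metric.closedBall q ρ ⊆ Ω := fun z hz => (hρN hz).2
  have hV := IsProperOpen.of_closedBall hf.continuousOn hf.isOpen_image hρΩ Metric.isOpen_ball hdis'
  set B := Metric.ball (f q) δ
  set V := Metric.ball q ρ ∩ f ⁻¹' B
  have hVρ : V ⊆ Metric.closedBall q ρ := inter_subset_left.trans Metric.ball_subset_closedBall
  have hVU : V ⊆ U := fun z hz => (hρN (hVρ hz)).1.1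
  have hqV : q ∈ V := ⟨Metric.mem_ball_self hρ, Metric.mem_ball_self hδ⟩
  have hno : NoDoubleArc f V := by
    intro w hw s₁ s₂ c₁ c₂ m₁ m₂ h0 e₁ e₂
    by_contra! hne
    have m0 : s₁ 0 ∈ V := m₁ (by simp)
    refine hf.no_double_arc hU Metric.isOpen_ball (convex_ball _ _)
      (Metric.ball_subset_closedBall.trans hRΩ') inter_subset_left (Metric.mem_ball_self hr) hUuniq
      hw c₁ c₂ (m₁.mono_right hVU) (m₂.mono_right hVU) h0 ?_ e₁ e₂ hne
    intro e
    exact (hρN (hVρ m0)).1.2 (hUuniq _ (hVU m0) e)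
  exact ⟨V, hVρ.trans hρΩ, hV.isOpen_source, hqV,
    hV.injOn_of_noDoubleArc Metric.isOpen_ball (convex_ball _ _)
      (hV.finite_fiber hf (hVρ.trans hρΩ)) hno hqV fun z hz => hquniq z (hVρ hz)⟩

end

/-- **Stoïlow's theorem on the branch set.** The branch set of a continuous, open and
discrete map on a planar domain is a discrete subset of the domain. -/
theorem stoilow_branch_set_discrete
    (Ω : Set ℂ) (hΩopen : IsOpen Ω) (hΩconn : IsConnected Ω)
    (f : ℂ → ℂ)
    (hcont : ContinuousOn f Ω)
    (hopen : ∀ U : Set ℂ, U ⊆ Ω → IsOpen U → IsOpen (f '' U))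
    (hdisc : ∀ y : ℂ, ∀ x ∈ Ω ∩ f ⁻¹' {y},
      ∃ V : Set ℂ, IsOpen V ∧ x ∈ V ∧ V ∩ (Ω ∩ f ⁻¹' {y}) = {x}) :
    ∀ x ∈ branchSet f Ω,
      ∃ V : Set ℂ, IsOpen V ∧ x ∈ V ∧ V ∩ branchSet f Ω = {x} := by
  have hf : IsOpenDiscrete f Ω := ⟨hΩopen, hcont, hopen, hdisc⟩
  intro x hx
  obtain ⟨U, hU, hxU, h⟩ := hf.exists_punctured_nhds hx.1
  refine ⟨U, hU, hxU, Set.Subset.antisymm ?_ ?_⟩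
  · rintro q ⟨hqU, hqB⟩
    by_contra hqx
    obtain ⟨V, hVΩ, hV, hqV, hinj⟩ := h q hqU hqx
    exact hqB.2 ⟨V, hV, hqV, hVΩ, hf.exists_partialHomeomorph hVΩ hV hinj⟩
  · rintro _ rfl
    exact ⟨hxU, hx⟩
end
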